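/- arXiv:1611.09060 — 2 statements merged into one kernel-verified Lean document; each statement's English description precedes it below -/
import Mathlib

section
/- For an integer s ≥ 2, let δ be a positive real such that every finite simple graph H with no K_{s+1} minor satisfies |E(H)| ≤ δ|V(H)|. Then every finite simple graph with no K_{s+1} minor is (s, ⌊δ(2δ − s + 1)⌋ − s + 1)-choosable. -/
/-!
Write `ℓ = ⌊δ(2δ - s + 1)⌋` and `d = ℓ - s + 1`. By induction on the number of edges it suffices to
find in every `K_{s+1}`-minor-free graph with an edge one of three reducible configurations
(`exists_colouring_of_reducible`): a vertex of positive degree less than `s`; an edge whose ends both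
have degree at most `ℓ`; or an independent set `S₁` of vertices of degree `s`, each assigned to a
neighbour, such that no vertex `w` has more than `min(d, ℓ - |N(w) \ S₁|)` vertices assigned to it.
They are reducible because a list colouring of defect at most `d` may be chosen so that each vertex of
positive defect `k` has degree at least `k + s - 1` (`exists_good_colouring`); a vertex of `S₁` with
no free colour sees each colour of its list exactly once and receives the colour of the neighbour to
which it is assigned.

Suppose that the first two configurations are absent. Then the vertices of degree at most `ℓ` form an
independent set, and each of them has degree at least `s`. Contracting vertices of an independent set
one at a time into suitable neighbours gains at least one new edge per contraction, because their
neighbourhoods are not cliques (`contraction`), and the resulting graph again satisfies the density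
bound.

* If `δ > s`, contracting all vertices of degree at most `ℓ` gives that the average degree of the
  remaining vertices is at most `δ(δ + 1) ≤ δ(2δ - s + 1)`, a contradiction (`reducible_of_large`).
* The graphs `K_{s-1} + n K_1` show that `δ ≥ s - 1` (`le_density`). If `s - 1 ≤ δ ≤ s` and
  `s ≥ 4`, contract only the set `S` of vertices of degree exactly `s`. The contractions
  create stars spanning the neighbours of `S`, which bounds from below the number of edges among the
  vertices of large degree (`star_count`). Counting edges shows that the total capacity of the
  neighbours of `S` is at least `|S|` (`capacity_bound`), and a deficiency form of Hall's theorem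
  (`exists_assignment`) gives the third configuration (`reducible_of_small`).
* For `s = 3` the same argument is run with the constant `2`, valid for `K_4`-minor-free
  graphs (`ec_le_three`); for `s = 2` the graphs are forests and have leaves (`redLow_two`).
-/

open SimpleGraph

universe u v

section Defs

variable {V : Type u} {α : Type v}

/-- `H` is isomorphic to a subgraph of `G`: there is an injective graph homomorphism. -/
def ContainsSubgraph (G : SimpleGraph V) (H : SimpleGraph α) : Prop :=
  ∃ f : H →g G, Function.Injective f

/-- `G` is `(k,d)`-choosable: for every assignment of lists of exactly `k` colours there is a
colouring from the lists in which every vertex has at most `d` neighbours of its own colour. -/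
def Choosable (G : SimpleGraph V) (k : ℕ) (d : ℤ) : Prop :=
  ∀ L : V → Finset ℕ, (∀ v, (L v).card = k) →
    ∃ c : V → ℕ, (∀ v, c v ∈ L v) ∧
      ∀ v, (({w | G.Adj v w ∧ c w = c v}.ncard : ℤ)) ≤ d

/-- `G` is `(k,d)`-colourable: the vertices can be `k`-coloured with every vertex having at most
`d` neighbours of its own colour. -/
def DefColorable (G : SimpleGraph V) (k d : ℕ) : Prop :=
  ∃ c : V → Fin k, ∀ v, {w | G.Adj v w ∧ c w = c v}.ncard ≤ d

/-- `H` is a minor of `G`, via pairwise disjoint connected branch sets. -/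
def IsMinor (H : SimpleGraph α) (G : SimpleGraph V) : Prop :=
  ∃ B : α → Set V,
    (∀ a, (B a).Nonempty) ∧
    (∀ a, (G.induce (B a)).Connected) ∧
    (Pairwise fun a b => Disjoint (B a) (B b)) ∧
    (∀ a b, H.Adj a b → ∃ x ∈ B a, ∃ y ∈ B b, G.Adj x y)

/-- A subdivision of `H` whose path lengths all satisfy `lenOK` occurs as a subgraph of `G`:
the branch vertices are embedded injectively by `f`, each edge of `H` is replaced by a path of
`G` between the corresponding branch vertices, internal vertices of these paths avoid branch
vertices, and distinct paths meet only in common endpoints. -/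
def HasSubdivWith (G : SimpleGraph V) (H : SimpleGraph α) (lenOK : ℕ → Prop) : Prop :=
  ∃ f : α → V, Function.Injective f ∧
    ∃ P : ∀ ⦃a b : α⦄, H.Adj a b → G.Walk (f a) (f b),
      (∀ ⦃a b⦄ (h : H.Adj a b), (P h).IsPath ∧ lenOK (P h).length) ∧
      (∀ ⦃a b⦄ (h : H.Adj a b) (c : α), f c ∈ (P h).support → c = a ∨ c = b) ∧
      (∀ ⦃a b⦄ (h : H.Adj a b) ⦃a' b'⦄ (h' : H.Adj a' b'), s(a, b) ≠ s(a', b') →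
        ∀ x ∈ (P h).support, x ∈ (P h').support →
          (x = f a ∨ x = f b) ∧ (x = f a' ∨ x = f b'))

/-- Some `(≤ k)`-subdivision of `H` (each edge replaced by a path of length at most `k+1`)
is a subgraph of `G`. -/
def HasSubdivLE (G : SimpleGraph V) (k : ℕ) (H : SimpleGraph α) : Prop :=
  HasSubdivWith G H fun L => L ≤ k + 1

/-- `H` is a topological minor of `G`: some subdivision of `H` is a subgraph of `G`. -/
def HasTopMinor (G : SimpleGraph V) (H : SimpleGraph α) : Prop :=
  HasSubdivWith G H fun _ => True

/-- The exact `1`-subdivision of `H`: every edge is subdivided exactly once. -/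
def exactOneSubdivision (H : SimpleGraph α) : SimpleGraph (α ⊕ H.edgeSet) :=
  SimpleGraph.fromRel fun x y =>
    match x, y with
    | Sum.inl a, Sum.inr e => a ∈ (e : Sym2 α)
    | _, _ => False

/-- The graph `K*_{s,t}`: `K_{s,t}` together with `binom s 2` new vertices, each adjacent to a
distinct pair of vertices on the side of size `s`. -/
def KstarGraph (s t : ℕ) :
    SimpleGraph (Fin s ⊕ (Fin t ⊕ {p : Fin s × Fin s // p.1 < p.2})) :=
  SimpleGraph.fromRel fun x y =>
    match x, y with
    | Sum.inl _, Sum.inr (Sum.inl _) => True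
    | Sum.inl a, Sum.inr (Sum.inr c) => a = c.1.1 ∨ a = c.1.2
    | _, _ => False

/-- The auxiliary function `N₁(s,t,δ,δ₁)`. -/
noncomputable def N1 (s t : ℕ) (δ δ₁ : ℝ) : ℝ :=
  if s = 1 then (t : ℝ) - 1
  else if s = 2 then (δ - 2) * δ₁ * t / 2 + δ
  else (δ - s) * ((Nat.choose ⌊δ₁⌋₊ (s - 1) : ℝ) * ((t : ℝ) - 1) + δ₁ / 2) + δ

/-- The maximum average degree of `G`: maximum of `2|E(H)|/|V(H)|` over nonempty subgraphs. -/
noncomputable def mad [Fintype V] (G : SimpleGraph V) : ℝ :=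
  sSup {q : ℝ | ∃ H : G.Subgraph, H.verts.Nonempty ∧
    q = 2 * (H.edgeSet.ncard : ℝ) / (H.verts.ncard : ℝ)}

/-- `∇₀(G)`: maximum of `|E(H)|/|V(H)|` over nonempty subgraphs of `G`. -/
noncomputable def nabla0 [Fintype V] (G : SimpleGraph V) : ℝ :=
  sSup {q : ℝ | ∃ H : G.Subgraph, H.verts.Nonempty ∧
    q = (H.edgeSet.ncard : ℝ) / (H.verts.ncard : ℝ)}

/-- `∇₁(G)`: maximum of `|E(H)|/|V(H)|` over graphs `H` some `(≤2)`-subdivision of which is a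
subgraph of `G`. -/
noncomputable def nabla1 [Fintype V] (G : SimpleGraph V) : ℝ :=
  sSup {q : ℝ | ∃ (n : ℕ) (H : SimpleGraph (Fin n)), 0 < n ∧
    HasSubdivLE G 2 H ∧ q = (H.edgeSet.ncard : ℝ) / (n : ℝ)}

end Defs

/-- The vertex type of the graph `G(s,N)` (here indexed by `t = s - 2`). -/
def GVert : ℕ → ℕ → Type
  | 0, N => Fin (N + 2)
  | t + 1, N => Option (Fin (N + 1) × GVert t N)

/-- The graph `G(s,N)` (indexed by `t = s - 2`): `GGraph 0 N = G(2,N) = K_{1,N+1}`, and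
`GGraph (t+1) N = G(t+3,N)` is obtained from `N+1` disjoint copies of `GGraph t N` by adding
a dominant vertex. -/
def GGraph : (t : ℕ) → (N : ℕ) → SimpleGraph (GVert t N)
  | 0, N => SimpleGraph.fromRel fun i j => i = (0 : Fin (N + 2))
  | t + 1, N => SimpleGraph.fromRel fun x y =>
      match x, y with
      | none, some _ => True
      | some (i, a), some (j, b) => i = j ∧ (GGraph t N).Adj a b
      | _, _ => False

section More

variable {V : Type u} {α : Type v}

/-- `r` is a forest order witnessing that `H` is a subgraph of the closure of a rooted forest:
`r` is a partial order in which the set of ancestors of each vertex is a chain, and adjacent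
vertices of `H` are comparable. -/
def IsForestOrder (H : SimpleGraph α) (r : α → α → Prop) : Prop :=
  IsPartialOrder α r ∧ (∀ v : α, IsChain r {u | r u v}) ∧
    (∀ x y, H.Adj x y → r x y ∨ r y x)

/-- The tree-depth of `H`: the minimum height of a rooted forest whose closure contains `H`
as a subgraph (the height being measured as the maximum number of vertices on a
root--to--leaf path). -/
noncomputable def treeDepth (H : SimpleGraph α) : ℕ :=
  sInf {k | ∃ r : α → α → Prop, IsForestOrder H r ∧ ∀ v, {u | r u v}.ncard ≤ k}

/-- The vertex cover number `τ(H)`. -/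
noncomputable def vertexCoverNumber (H : SimpleGraph α) : ℕ :=
  sInf {k | ∃ S : Set α, S.ncard = k ∧ ∀ ⦃x y⦄, H.Adj x y → x ∈ S ∨ y ∈ S}

/-- The graph obtained from `ℓ` disjoint copies of the star `K_{1,k}` by adding one dominant
vertex. -/
def Hlk (l k : ℕ) : SimpleGraph (Option (Fin l × Fin (k + 1))) :=
  SimpleGraph.fromRel fun x y =>
    match x, y with
    | none, some _ => True
    | some (i, a), some (j, _) => i = j ∧ a = 0
    | _, _ => False

/-- The star `K_{1,k}` together with `m` isolated vertices. -/
def StarPlusIsolated (k m : ℕ) : SimpleGraph (Fin (k + 1) ⊕ Fin m) :=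
  SimpleGraph.fromRel fun x y =>
    match x, y with
    | Sum.inl i, Sum.inl _ => i = 0
    | _, _ => False

/-- `G` admits a `k`-stack layout: a linear ordering of the vertices (given by an injection
into `ℕ`) and an assignment of the edges to `k` stacks so that no two edges in a common stack
cross. -/
def HasStackLayout (G : SimpleGraph V) (k : ℕ) : Prop :=
  ∃ f : V → ℕ, Function.Injective f ∧
    ∃ σ : Sym2 V → Fin k,
      ∀ a b c d : V, G.Adj a b → G.Adj c d → σ s(a, b) = σ s(c, d) →
        ¬(f a < f c ∧ f c < f b ∧ f b < f d)

/-- `G` admits a `k`-queue layout: a linear ordering of the vertices (given by an injection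
into `ℕ`) and an assignment of the edges to `k` queues so that no two edges in a common queue
are nested. -/
def HasQueueLayout (G : SimpleGraph V) (k : ℕ) : Prop :=
  ∃ f : V → ℕ, Function.Injective f ∧
    ∃ σ : Sym2 V → Fin k,
      ∀ a b c d : V, G.Adj a b → G.Adj c d → σ s(a, b) = σ s(c, d) →
        ¬(f a < f c ∧ f c < f d ∧ f d < f b)

end More

namespace DefectiveChoice

open Finset

/-! ### Minors and contraction -/

variable {V : Type}

/-- `G` has no `K_{s+1}` minor. -/
def MinorFree (s : ℕ) (G : SimpleGraph V) : Prop :=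
  ¬ IsMinor (⊤ : SimpleGraph (Fin (s + 1))) G

lemma reachable_of_adj {W W' : Type} {G : SimpleGraph W} {G' : SimpleGraph W'} (f : W → W')
    (h : ∀ a b, G.Adj a b → G'.Reachable (f a) (f b)) {a b : W} (hab : G.Reachable a b) :
    G'.Reachable (f a) (f b) := by
  obtain ⟨p⟩ := hab
  induction p with
  | nil => exact Reachable.refl _
  | cons hadj _ ih => exact (h _ _ hadj).trans ih

lemma IsMinor.of_le {W : Type} {K : SimpleGraph W} {H G : SimpleGraph V} (hle : H ≤ G)
    (h : IsMinor K H) : IsMinor K G := by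
  obtain ⟨B, h1, h2, h3, h4⟩ := h
  refine ⟨B, h1, fun a => (h2 a).mono ?_, h3, fun a b hab => ?_⟩
  · intro x y hxy
    exact hle hxy
  · obtain ⟨x, hx, y, hy, hxy⟩ := h4 a b hab
    exact ⟨x, hx, y, hy, hle hxy⟩

lemma MinorFree.mono {s : ℕ} {H G : SimpleGraph V} (hle : H ≤ G) (h : MinorFree s G) :
    MinorFree s H := fun hm => h (IsMinor.of_le hle hm)

lemma MinorFree.induce {s : ℕ} {G : SimpleGraph V} (h : MinorFree s G) (T : Set V) :
    MinorFree s (G.induce T) := by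
  rintro ⟨B, h1, h2, h3, h4⟩
  refine h ⟨fun a => Subtype.val '' B a, fun a => (h1 a).image _, fun a => ?_, ?_, ?_⟩
  · rw [SimpleGraph.connected_iff]
    refine ⟨?_, ?_⟩
    · rintro ⟨_, x, hx, rfl⟩ ⟨_, y, hy, rfl⟩
      exact reachable_of_adj (G := (G.induce T).induce (B a))
        (G' := G.induce (Subtype.val '' B a))
        (fun z => ⟨z.1.1, z.1, z.2, rfl⟩) (fun p q hpq => Adj.reachable hpq)
        ((h2 a).preconnected ⟨x, hx⟩ ⟨y, hy⟩)
    · obtain ⟨x, hx⟩ := h1 a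
      exact ⟨⟨x.1, x, hx, rfl⟩⟩
  · intro a b hab
    exact (Set.disjoint_image_iff Subtype.val_injective).2 (h3 hab)
  · intro a b hab
    obtain ⟨x, hx, y, hy, hxy⟩ := h4 a b hab
    exact ⟨x.1, ⟨x, hx, rfl⟩, y.1, ⟨y, hy, rfl⟩, hxy⟩

/-- An isolated vertex lies in no branch set of a `K_{s+1}`-model with `s ≥ 1`. -/
lemma notMem_of_isolated {s : ℕ} (hs : 1 ≤ s) {G : SimpleGraph V} {v : V}
    (hv : ∀ u, ¬ G.Adj v u) {B : Fin (s + 1) → Set V}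
    (h2 : ∀ a, (G.induce (B a)).Connected)
    (h4 : ∀ a b, (⊤ : SimpleGraph (Fin (s + 1))).Adj a b → ∃ x ∈ B a, ∃ y ∈ B b, G.Adj x y)
    (a : Fin (s + 1)) : v ∉ B a := by
  intro hva
  have : Nontrivial (Fin (s + 1)) := Fin.nontrivial_iff_two_le.2 (by omega)
  obtain ⟨b, hb⟩ := exists_ne a
  obtain ⟨x, hx, y, -, hxy⟩ := h4 a b hb.symm
  have hxv : x ≠ v := by
    rintro rfl
    exact hv _ hxy
  obtain ⟨p⟩ := (h2 a).preconnected ⟨v, hva⟩ ⟨x, hx⟩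
  cases p with
  | nil => exact hxv rfl
  | cons hadj _ => exact hv _ hadj

lemma not_minorFree_of_clique {s : ℕ} {G : SimpleGraph V} (T : Finset V)
    (hT : s + 1 ≤ T.card) (hcl : ∀ a ∈ T, ∀ b ∈ T, a ≠ b → G.Adj a b) : ¬ MinorFree s G := by
  intro h
  obtain ⟨T', hT', hcard⟩ := Finset.exists_subset_card_eq hT
  let e := T'.equivFinOfCardEq hcard
  refine h ⟨fun a => {(e.symm a).1}, fun a => Set.singleton_nonempty _, fun a => ?_, ?_, ?_⟩
  · rw [SimpleGraph.connected_iff]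
    refine ⟨?_, ⟨⟨_, rfl⟩⟩⟩
    rintro ⟨x, rfl⟩ ⟨y, rfl⟩
    exact Reachable.refl _
  · intro a b hab
    simp only [Set.disjoint_singleton]
    intro hc
    exact hab (e.symm.injective (Subtype.ext hc))
  · intro a b hab
    refine ⟨_, rfl, _, rfl, hcl _ (hT' (e.symm a).2) _ (hT' (e.symm b).2) ?_⟩
    intro hc
    exact hab (e.symm.injective (Subtype.ext hc))

/-- The graph obtained from `G` by contracting `v` into `x`. It is kept on the vertex type of `G`,
with `v` becoming an isolated vertex. -/
def contract (G : SimpleGraph V) (v x : V) : SimpleGraph V where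
  Adj a b := a ≠ b ∧ a ≠ v ∧ b ≠ v ∧ (G.Adj a b ∨ (a = x ∧ G.Adj v b) ∨ (b = x ∧ G.Adj v a))
  symm := ⟨by
    rintro a b ⟨h1, h2, h3, h4⟩
    refine ⟨h1.symm, h3, h2, ?_⟩
    rcases h4 with h | h | h
    · exact Or.inl h.symm
    · exact Or.inr (Or.inr h)
    · exact Or.inr (Or.inl h)⟩
  loopless := ⟨fun a h => h.1 rfl⟩

lemma MinorFree.contract {s : ℕ} (hs : 1 ≤ s) {G : SimpleGraph V} (h : MinorFree s G) {v x : V}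
    (hvx : G.Adj v x) : MinorFree s (contract G v x) := by
  classical
  rintro ⟨B, h1, h2, h3, h4⟩
  have hv : ∀ a, v ∉ B a := notMem_of_isolated hs
    (G := DefectiveChoice.contract G v x) (fun u hu => hu.2.1 rfl) h2 h4
  let B' : Fin (s + 1) → Set V := fun a => if x ∈ B a then insert v (B a) else B a
  have hsub : ∀ a, B a ⊆ B' a := by
    intro a y hy
    by_cases hx : x ∈ B a
    · simp [B', hx, hy]
    · simpa [B', hx] using hy
  have hvB : ∀ a, x ∈ B a → v ∈ B' a := by
    intro a hx
    simp [B', hx]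
  have hB' : ∀ a y, y ∈ B' a → y ∈ B a ∨ (y = v ∧ x ∈ B a) := by
    intro a y hy
    by_cases hx : x ∈ B a
    · simp only [B', hx, if_true, Set.mem_insert_iff] at hy
      tauto
    · simp only [B', hx, if_false] at hy
      exact Or.inl hy
  refine h ⟨B', fun a => (h1 a).mono (hsub a), fun a => ?_, ?_, ?_⟩
  · obtain ⟨y, hy⟩ := h1 a
    have hstep : ∀ p q : B a, ((DefectiveChoice.contract G v x).induce (B a)).Adj p q →
        (G.induce (B' a)).Reachable ⟨p.1, hsub a p.2⟩ ⟨q.1, hsub a q.2⟩ := by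
      rintro ⟨p, hp⟩ ⟨q, hq⟩ ⟨-, -, -, hpq⟩
      change G.Adj p q ∨ (p = x ∧ G.Adj v q) ∨ (q = x ∧ G.Adj v p) at hpq
      rcases hpq with hpq | ⟨rfl, hpq⟩ | ⟨rfl, hpq⟩
      · exact Adj.reachable hpq
      · have e1 : (G.induce (B' a)).Adj ⟨p, hsub a hp⟩ ⟨v, hvB a hp⟩ := hvx.symm
        have e2 : (G.induce (B' a)).Adj ⟨v, hvB a hp⟩ ⟨q, hsub a hq⟩ := hpq
        exact e1.reachable.trans e2.reachable
      · have e1 : (G.induce (B' a)).Adj ⟨p, hsub a hp⟩ ⟨v, hvB a hq⟩ := hpq.symm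
        have e2 : (G.induce (B' a)).Adj ⟨v, hvB a hq⟩ ⟨q, hsub a hq⟩ := hvx
        exact e1.reachable.trans e2.reachable
    have hin : ∀ p q (hp : p ∈ B a) (hq : q ∈ B a),
        (G.induce (B' a)).Reachable ⟨p, hsub a hp⟩ ⟨q, hsub a hq⟩ := by
      intro p q hp hq
      exact reachable_of_adj (G := (DefectiveChoice.contract G v x).induce (B a))
        (G' := G.induce (B' a)) (fun z => ⟨z.1, hsub a z.2⟩) hstep
        ((h2 a).preconnected ⟨p, hp⟩ ⟨q, hq⟩)
    have hto : ∀ p (hp : p ∈ B' a), (G.induce (B' a)).Reachable ⟨p, hp⟩ ⟨y, hsub a hy⟩ := by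
      intro p hp
      rcases hB' a p hp with hp' | ⟨rfl, hx⟩
      · exact hin p y hp' hy
      · have e1 : (G.induce (B' a)).Adj ⟨p, hp⟩ ⟨x, hsub a hx⟩ := hvx
        exact e1.reachable.trans (hin x y hx hy)
    rw [SimpleGraph.connected_iff]
    refine ⟨fun p q => (hto p.1 p.2).trans (hto q.1 q.2).symm, ⟨⟨y, hsub a hy⟩⟩⟩
  · intro a b hab
    rw [Set.disjoint_left]
    intro y hya hyb
    have hd := Set.disjoint_left.1 (h3 hab)
    rcases hB' a y hya with h | ⟨rfl, hx⟩
    · rcases hB' b y hyb with h' | ⟨rfl, hx'⟩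
      · exact hd h h'
      · exact hv a h
    · rcases hB' b y hyb with h' | ⟨-, hx'⟩
      · exact hv b h'
      · exact hd hx hx'
  · intro a b hab
    obtain ⟨p, hp, q, hq, -, -, -, hpq⟩ := h4 a b hab
    rcases hpq with hpq | ⟨rfl, hpq⟩ | ⟨rfl, hpq⟩
    · exact ⟨p, hsub a hp, q, hsub b hq, hpq⟩
    · exact ⟨v, hvB a hp, q, hsub b hq, hpq⟩
    · exact ⟨p, hsub a hp, v, hvB b hq, hpq.symm⟩

/-! ### Counting edges -/

section Counting

open scoped Classical

/-- The graph obtained from `G` by deleting all edges meeting `S`. -/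
def strip (G : SimpleGraph V) (S : Finset V) : SimpleGraph V where
  Adj a b := G.Adj a b ∧ a ∉ S ∧ b ∉ S
  symm := ⟨fun _ _ h => ⟨h.1.symm, h.2.2, h.2.1⟩⟩
  loopless := ⟨fun _ h => h.1.ne rfl⟩

lemma strip_le (G : SimpleGraph V) (S : Finset V) : strip G S ≤ G := fun _ _ h => h.1

lemma card_star (v : V) (T : Finset V) : (T.image fun u => s(v, u)).card = T.card := by
  refine Finset.card_image_of_injective _ fun a b hab => ?_
  exact Sym2.congr_right.1 hab

variable [Fintype V]

/-- The neighbourhood of `v`, as a finset. -/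
noncomputable def nb (G : SimpleGraph V) (v : V) : Finset V := univ.filter fun w => G.Adj v w

/-- The degree of `v`. -/
noncomputable def dg (G : SimpleGraph V) (v : V) : ℕ := (nb G v).card

/-- The edge set, as a finset. -/
noncomputable def es (G : SimpleGraph V) : Finset (Sym2 V) := univ.filter fun e => e ∈ G.edgeSet

/-- The number of edges. -/
noncomputable def ec (G : SimpleGraph V) : ℕ := (es G).card

@[simp] lemma mem_nb {G : SimpleGraph V} {v w : V} : w ∈ nb G v ↔ G.Adj v w := by
  simp [nb]

@[simp] lemma mem_es {G : SimpleGraph V} {e : Sym2 V} : e ∈ es G ↔ e ∈ G.edgeSet := by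
  simp [es]

lemma ec_eq_ncard (G : SimpleGraph V) : ec G = G.edgeSet.ncard := by
  rw [ec, ← Set.ncard_coe_finset]
  congr 1
  ext e
  simp

lemma dg_pos {G : SimpleGraph V} {v w : V} (h : G.Adj v w) : 0 < dg G v :=
  Finset.card_pos.2 ⟨w, mem_nb.2 h⟩

lemma exists_adj_of_dg_pos {G : SimpleGraph V} {v : V} (h : 0 < dg G v) : ∃ w, G.Adj v w := by
  obtain ⟨w, hw⟩ := Finset.card_pos.1 h
  exact ⟨w, mem_nb.1 hw⟩

lemma sum_dg (G : SimpleGraph V) : ∑ v, dg G v = 2 * ec G := by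
  have h := G.sum_degrees_eq_twice_card_edges
  have h1 : ∀ v, dg G v = G.degree v := by
    intro v
    rw [dg, ← G.card_neighborFinset_eq_degree]
    congr 1
    ext w
    simp
  have h2 : ec G = G.edgeFinset.card := by
    rw [ec]
    congr 1
    ext e
    simp
  rw [h2, ← h]
  exact Finset.sum_congr rfl fun v _ => h1 v

lemma sum_dg_eq {G : SimpleGraph V} {T : Finset V} (hT : ∀ a b, G.Adj a b → a ∈ T) :
    ∑ v ∈ T, dg G v = 2 * ec G := by
  rw [← sum_dg]
  refine Finset.sum_subset (Finset.subset_univ _) fun v _ hv => ?_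
  by_contra h
  obtain ⟨w, hw⟩ := exists_adj_of_dg_pos (Nat.pos_of_ne_zero h)
  exact hv (hT _ _ hw)

lemma es_mono {H G : SimpleGraph V} (h : H ≤ G) : es H ⊆ es G := by
  intro e he
  exact mem_es.2 (edgeSet_mono h (mem_es.1 he))

lemma ec_lt_of_le {H G : SimpleGraph V} (h : H ≤ G) {x y : V} (hG : G.Adj x y)
    (hH : ¬ H.Adj x y) : ec H < ec G := by
  refine Finset.card_lt_card ⟨es_mono h, fun hc => hH ?_⟩
  have : s(x, y) ∈ es H := hc (mem_es.2 hG)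
  exact mem_es.1 this

lemma es_strip_singleton (G : SimpleGraph V) (v : V) :
    es G = es (strip G {v}) ∪ (nb G v).image fun u => s(v, u) := by
  ext e
  induction e using Sym2.ind with
  | _ a b =>
    simp only [mem_es, mem_edgeSet, Finset.mem_union, Finset.mem_image, mem_nb]
    constructor
    · intro h
      by_cases ha : a = v
      · exact Or.inr ⟨b, ha ▸ h, by rw [ha]⟩
      · by_cases hb : b = v
        · exact Or.inr ⟨a, hb ▸ h.symm, by rw [hb, Sym2.eq_swap]⟩
        · exact Or.inl ⟨h, by simpa using ha, by simpa using hb⟩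
    · rintro (h | ⟨u, hu, he⟩)
      · exact h.1
      · rw [← mem_edgeSet, ← he]
        exact hu

lemma ec_strip_singleton (G : SimpleGraph V) (v : V) :
    ec (strip G {v}) + dg G v = ec G := by
  rw [ec, ec, es_strip_singleton G v, Finset.card_union_of_disjoint, card_star, dg]
  rw [Finset.disjoint_left]
  intro e he he'
  simp only [Finset.mem_image, mem_nb] at he'
  obtain ⟨u, -, rfl⟩ := he'
  have := (mem_es.1 he : (strip G {v}).Adj v u).2.1
  simp at this

lemma ec_strip (G : SimpleGraph V) (S : Finset V)
    (hS : ∀ a ∈ S, ∀ b ∈ S, ¬ G.Adj a b) : ec (strip G S) + ∑ v ∈ S, dg G v = ec G := by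
  induction S using Finset.induction_on with
  | empty =>
    have : strip G ∅ = G := by
      ext a b
      simp [strip]
    simp [this]
  | insert v S hv ih =>
    have ih' := ih fun a ha b hb => hS a (by simp [ha]) b (by simp [hb])
    have e1 : strip G (insert v S) = strip (strip G S) {v} := by
      ext a b
      simp only [strip, Finset.mem_insert, Finset.mem_singleton]
      tauto
    have e2 : dg (strip G S) v = dg G v := by
      rw [dg, dg]
      congr 1
      ext w
      simp only [mem_nb, strip]
      constructor
      · exact fun h => h.1
      · exact fun h => ⟨h, hv, fun hw => hS v (by simp) w (by simp [hw]) h⟩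
    rw [Finset.sum_insert hv, e1, ← e2]
    have := ec_strip_singleton (strip G S) v
    omega

/-- Contracting the edge `vx` loses the edges at `v`, but the edge from `x` to each neighbour
of `v` that was not adjacent to `x` is gained. -/
lemma ec_contract {G : SimpleGraph V} {v x : V} (hvx : G.Adj v x) :
    ec G + ((nb G v).filter fun u => u ≠ x ∧ ¬ G.Adj x u).card ≤
      ec (contract G v x) + dg G v := by
  have hsub : es (strip G {v}) ∪ ((nb G v).filter fun u => u ≠ x ∧ ¬ G.Adj x u).image
      (fun u => s(x, u)) ⊆ es (contract G v x) := by
    intro e he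
    rcases Finset.mem_union.1 he with he | he
    · induction e using Sym2.ind with
      | _ a b =>
        have h : (strip G {v}).Adj a b := mem_es.1 he
        refine mem_es.2 ⟨h.1.ne, ?_, ?_, Or.inl h.1⟩
        · simpa using h.2.1
        · simpa using h.2.2
    · simp only [Finset.mem_image, Finset.mem_filter, mem_nb] at he
      obtain ⟨u, ⟨h1, h2, -⟩, rfl⟩ := he
      exact mem_es.2 ⟨h2.symm, hvx.ne', h1.ne', Or.inr (Or.inl ⟨rfl, h1⟩)⟩
  have h1 := Finset.card_le_card hsub
  rw [Finset.card_union_of_disjoint, card_star] at h1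
  · have h2 := ec_strip_singleton G v
    simp only [ec] at *
    omega
  · rw [Finset.disjoint_left]
    intro e he he'
    simp only [Finset.mem_image, Finset.mem_filter] at he'
    obtain ⟨u, ⟨-, -, h⟩, rfl⟩ := he'
    exact h (mem_es.1 he : (strip G {v}).Adj x u).1

/-- Every `K_{s+1}`-minor-free graph on `V` whose edges lie within `T` has at most `δ|T|` edges. -/
def Dens (V : Type) [Fintype V] (s : ℕ) (δ : ℝ) : Prop :=
  ∀ (H : SimpleGraph V) (T : Finset V), MinorFree s H → (∀ a b, H.Adj a b → a ∈ T) →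
    (ec H : ℝ) ≤ δ * (T.card : ℝ)

lemma dens_of_forall {s : ℕ} {δ : ℝ}
    (hdens : ∀ (W : Type) [Fintype W] (H : SimpleGraph W),
      ¬ IsMinor (⊤ : SimpleGraph (Fin (s + 1))) H →
        (H.edgeSet.ncard : ℝ) ≤ δ * (Fintype.card W : ℝ)) : Dens V s δ := by
  intro H T hH hT
  have h := hdens (T : Set V) (H.induce (T : Set V)) (hH.induce _)
  have hc : Fintype.card ↥(T : Set V) = T.card := by simp
  rw [hc, ← ec_eq_ncard] at h
  refine le_trans ?_ h
  have : es H ⊆ (es (H.induce (T : Set V))).image (Sym2.map Subtype.val) := by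
    intro e he
    induction e using Sym2.ind with
    | _ a b =>
      have hab : H.Adj a b := mem_es.1 he
      refine Finset.mem_image.2 ⟨s(⟨a, hT _ _ hab⟩, ⟨b, hT _ _ hab.symm⟩), ?_, rfl⟩
      exact mem_es.2 hab
  exact_mod_cast (Finset.card_le_card this).trans Finset.card_image_le

end Counting

/-! ### Contracting an independent set -/

section Contraction

open scoped Classical

variable [Fintype V]

/-- Contract each vertex `v` of an independent set `S` of vertices of degree at least `s` into a
suitable neighbour `φ v`. Since the current neighbourhood of `v` is never a clique (else there would
be a `K_{s+1}`), `φ v` can be chosen so that at least one new edge appears; thus contracting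
`v` loses at most `deg v - 1` edges. The fifth property is the induction invariant: the contractions
only affect the neighbours of `S`. -/
lemma contraction {s : ℕ} (hs : 1 ≤ s) {G : SimpleGraph V} (hG : MinorFree s G) (S : Finset V)
    (hS : ∀ a ∈ S, ∀ b ∈ S, ¬ G.Adj a b) (hdeg : ∀ v ∈ S, s ≤ dg G v) :
    ∃ (H : SimpleGraph V) (φ : V → V), MinorFree s H ∧
      (∀ a b, H.Adj a b → a ∉ S ∧ ∃ c, G.Adj a c) ∧
      (∀ a b, a ∉ S → b ∉ S → G.Adj a b → H.Adj a b) ∧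
      (∀ v ∈ S, G.Adj v (φ v) ∧ ∀ u, G.Adj v u → u ≠ φ v → H.Adj (φ v) u) ∧
      (∀ a b, (∀ v ∈ S, ¬ G.Adj v a) → H.Adj a b → G.Adj a b) ∧
      ec G + S.card ≤ ec H + ∑ v ∈ S, dg G v := by
  induction S using Finset.induction_on with
  | empty =>
    exact ⟨G, id, hG, by simp; exact fun a b h => ⟨b, h⟩, by simp, by simp, by simp, by simp⟩
  | insert v S hv ih =>
    obtain ⟨H, φ, h1, h2, h3, h4, h5, h6⟩ := ih
      (fun a ha b hb => hS a (by simp [ha]) b (by simp [hb])) (fun a ha => hdeg a (by simp [ha]))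
    have hvS : ∀ u ∈ S, ¬ G.Adj u v := fun u hu => hS u (by simp [hu]) v (by simp)
    have hvS' : ∀ u, G.Adj v u → u ∉ S := fun u hu hus => hvS u hus hu.symm
    have hadj : ∀ u, H.Adj v u ↔ G.Adj v u :=
      fun u => ⟨fun h => h5 v u hvS h, fun h => h3 v u hv (hvS' u h) h⟩
    have hnb : nb H v = nb G v := by
      ext u
      simp [hadj]
    obtain ⟨x, hx, y, hy, hxy, hnxy⟩ :
        ∃ x, G.Adj v x ∧ ∃ y, G.Adj v y ∧ x ≠ y ∧ ¬ H.Adj x y := by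
      by_contra hcon
      push Not at hcon
      refine not_minorFree_of_clique (s := s) (G := H) (insert v (nb G v)) ?_ ?_ h1
      · rw [Finset.card_insert_of_notMem (by simp)]
        exact Nat.succ_le_succ (hdeg v (by simp))
      · intro a ha b hb hab
        rw [Finset.mem_insert, mem_nb] at ha hb
        rcases ha with rfl | ha
        · rcases hb with rfl | hb
          · exact absurd rfl hab
          · exact (hadj _).2 hb
        · rcases hb with rfl | hb
          · exact ((hadj _).2 ha).symm
          · exact hcon a ha b hb hab
    have hHx : H.Adj v x := (hadj x).2 hx
    refine ⟨contract H v x, Function.update φ v x, h1.contract hs hHx, ?_, ?_, ?_, ?_, ?_⟩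
    · rintro a b ⟨hab, hav, hbv, h⟩
      have key : a ∉ S ∧ ∃ c, G.Adj a c := by
        rcases h with h | ⟨rfl, h⟩ | ⟨rfl, h⟩
        · exact h2 a b h
        · exact h2 _ _ hHx.symm
        · exact h2 _ _ h.symm
      exact ⟨by simp [hav, key.1], key.2⟩
    · intro a b ha hb hab
      simp only [Finset.mem_insert, not_or] at ha hb
      exact ⟨hab.ne, ha.1, hb.1, Or.inl (h3 a b ha.2 hb.2 hab)⟩
    · intro w hw
      rcases Finset.mem_insert.1 hw with rfl | hwS
      · rw [Function.update_self]
        exact ⟨hx, fun u hu hux => ⟨hux.symm, hx.ne', hu.ne', Or.inr (Or.inl ⟨rfl, (hadj u).2 hu⟩)⟩⟩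
      · have hwv : w ≠ v := by
          rintro rfl
          exact hv hwS
        rw [Function.update_of_ne hwv]
        have hne : ∀ u, G.Adj w u → u ≠ v := by
          rintro u hu rfl
          exact hvS w hwS hu
        exact ⟨(h4 w hwS).1, fun u hu hux => ⟨hux.symm, hne _ (h4 w hwS).1, hne u hu,
          Or.inl ((h4 w hwS).2 u hu hux)⟩⟩
    · rintro a b ha ⟨hab, hav, hbv, h⟩
      rcases h with h | ⟨rfl, h⟩ | ⟨rfl, h⟩
      · exact h5 a b (fun u hu => ha u (by simp [hu])) h
      · exact absurd hx (ha v (by simp))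
      · exact absurd ((hadj a).1 h) (ha v (by simp))
    · have e1 := ec_contract hHx
      have e2 : 0 < ((nb H v).filter fun u => u ≠ x ∧ ¬ H.Adj x u).card := by
        refine Finset.card_pos.2 ⟨y, ?_⟩
        simp [hadj, hy, hxy.symm, hnxy]
      have e3 : dg H v = dg G v := by rw [dg, dg, hnb]
      rw [Finset.sum_insert hv, Finset.card_insert_of_notMem hv]
      omega

end Contraction

/-! ### Reducible configurations -/

section Colouring

open scoped Classical

variable [Fintype V]

/-- The defect of `v` under `c`: the number of neighbours of `v` with the colour of `v`. -/
noncomputable def dfct (G : SimpleGraph V) (c : V → ℕ) (v : V) : ℕ :=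
  ((nb G v).filter fun w => c w = c v).card

lemma exists_free_colour {G : SimpleGraph V} {c : V → ℕ} {v : V} {A : Finset ℕ}
    (h : ((nb G v).image c).card < A.card) : ∃ q ∈ A, ∀ u, G.Adj v u → c u ≠ q := by
  obtain ⟨q, hq, hq'⟩ := Finset.exists_mem_notMem_of_card_lt_card h
  exact ⟨q, hq, fun u hu hc => hq' (Finset.mem_image.2 ⟨u, mem_nb.2 hu, hc⟩)⟩

/-- Recolouring a vertex with a colour absent from its neighbourhood removes its defect and raises
no other defect. -/
lemma dfct_update {G H : SimpleGraph V} {c : V → ℕ} {v : V} {q : ℕ}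
    (hq : ∀ u, G.Adj v u → c u ≠ q) (hH : ∀ a b, a ≠ v → b ≠ v → G.Adj a b → H.Adj a b) :
    dfct G (Function.update c v q) v = 0 ∧
      ∀ w, w ≠ v → dfct G (Function.update c v q) w ≤ dfct H c w := by
  constructor
  · rw [dfct, Finset.card_eq_zero, Finset.filter_eq_empty_iff]
    intro u hu
    rw [mem_nb] at hu
    rw [Function.update_self, Function.update_of_ne hu.ne']
    exact hq u hu
  · intro w hw
    refine Finset.card_le_card fun u hu => ?_
    simp only [Finset.mem_filter, mem_nb, Function.update_of_ne hw] at hu ⊢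
    obtain ⟨hu1, hu2⟩ := hu
    by_cases huv : u = v
    · rw [huv] at hu1 hu2
      rw [Function.update_self] at hu2
      exact absurd hu2.symm (hq w hu1.symm)
    · rw [Function.update_of_ne huv] at hu2
      exact ⟨hH _ _ hw huv hu1, hu2⟩

/-- A list colouring of defect at most `d` can be chosen so that moreover each vertex with positive
defect `k` has degree at least `k + s - 1`: otherwise some colour of its list is absent
from its neighbourhood, and recolouring lowers the sum of the defects. -/
lemma exists_good_colouring {s d : ℕ} {G : SimpleGraph V} {L : V → Finset ℕ}
    (hL : ∀ v, (L v).card = s) (h : ∃ c : V → ℕ, (∀ v, c v ∈ L v) ∧ ∀ v, dfct G c v ≤ d) :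
    ∃ c : V → ℕ, (∀ v, c v ∈ L v) ∧ (∀ v, dfct G c v ≤ d) ∧
      ∀ v, dfct G c v = 0 ∨ dfct G c v + s ≤ dg G v + 1 := by
  obtain ⟨c, hc⟩ := h
  induction hn : ∑ v, dfct G c v using Nat.strong_induction_on generalizing c with
  | _ n ih =>
    by_cases hgood : ∀ v, dfct G c v = 0 ∨ dfct G c v + s ≤ dg G v + 1
    · exact ⟨c, hc.1, hc.2, hgood⟩
    · push Not at hgood
      obtain ⟨v, hv0, hv⟩ := hgood
      have hcard : ((nb G v).image c).card < (L v).card := by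
        have hsub : (nb G v).image c ⊆
            insert (c v) (((nb G v).filter fun w => ¬ c w = c v).image c) := by
          intro q hq
          obtain ⟨u, hu, rfl⟩ := Finset.mem_image.1 hq
          by_cases huv : c u = c v
          · simp [huv]
          · exact Finset.mem_insert_of_mem (Finset.mem_image.2 ⟨u, by simp_all, rfl⟩)
        have h1 := Finset.card_le_card hsub
        have h2 := Finset.card_insert_le (c v) (((nb G v).filter fun w => ¬ c w = c v).image c)
        have h3 := Finset.card_image_le (s := (nb G v).filter fun w => ¬ c w = c v) (f := c)
        have h4 := Finset.card_filter_add_card_filter_not (s := nb G v) (fun w => c w = c v)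
        rw [hL]
        simp only [dfct, dg] at *
        omega
      obtain ⟨q, hq, hfree⟩ := exists_free_colour hcard
      obtain ⟨hz, hle⟩ := dfct_update hfree (H := G) (fun _ _ _ _ h => h)
      have hle' : ∀ w, dfct G (Function.update c v q) w ≤ dfct G c w := by
        intro w
        by_cases hw : w = v
        · rw [hw, hz]
          exact Nat.zero_le _
        · exact hle w hw
      refine ih _ ?_ (Function.update c v q) ⟨fun w => ?_, fun w => (hle' w).trans (hc.2 w)⟩ rfl
      · rw [← hn]
        refine Finset.sum_lt_sum (fun w _ => hle' w) ⟨v, Finset.mem_univ _, ?_⟩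
        rw [hz]
        omega
      · by_cases hw : w = v
        · rw [hw, Function.update_self]
          exact hq
        · rw [Function.update_of_ne hw]
          exact hc.1 w

/-- There is a vertex of positive degree less than `s`. -/
def RedLow (s : ℕ) (G : SimpleGraph V) : Prop := ∃ v, 0 < dg G v ∧ dg G v < s

/-- There is an edge both of whose ends have degree at least `s` and at most `d + s - 1`. -/
def RedEdge (s d : ℕ) (G : SimpleGraph V) : Prop :=
  ∃ x y, G.Adj x y ∧ (s ≤ dg G x ∧ dg G x < d + s) ∧ (s ≤ dg G y ∧ dg G y < d + s)

/-- There is a nonempty independent set `S` of vertices of degree `s`, each assigned to one of its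
neighbours, so that no vertex `w` is overloaded: the number of vertices assigned to `w` is at most
`d`, and at most `d + s - 1` minus the number of neighbours of `w` outside `S`. -/
def RedSet (s d : ℕ) (G : SimpleGraph V) : Prop :=
  ∃ (S : Finset V) (φ : V → V), S.Nonempty ∧ (∀ a ∈ S, ∀ b ∈ S, ¬ G.Adj a b) ∧
    (∀ v ∈ S, dg G v = s) ∧ (∀ v ∈ S, G.Adj v (φ v)) ∧
    ∀ v ∈ S, (S.filter fun u => φ u = φ v).card ≤ d ∧
      (S.filter fun u => φ u = φ v).card + (nb G (φ v) \ S).card + 1 ≤ d + s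

lemma extend_low {s d : ℕ} {G : SimpleGraph V} {L : V → Finset ℕ}
    (hL : ∀ v, (L v).card = s) {v : V} (hv : dg G v < s)
    (h : ∃ c : V → ℕ, (∀ v, c v ∈ L v) ∧ ∀ u, dfct (strip G {v}) c u ≤ d) :
    ∃ c : V → ℕ, (∀ v, c v ∈ L v) ∧ ∀ u, dfct G c u ≤ d := by
  obtain ⟨c, hc1, hc2⟩ := h
  obtain ⟨q, hq, hfree⟩ := exists_free_colour (G := G) (c := c) (v := v) (A := L v)
    (by rw [hL]; exact Finset.card_image_le.trans_lt hv)
  obtain ⟨hz, hle⟩ := dfct_update hfree (H := strip G {v})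
    (fun a b ha hb h => ⟨h, by simpa using ha, by simpa using hb⟩)
  refine ⟨Function.update c v q, fun w => ?_, fun w => ?_⟩
  · by_cases hw : w = v
    · rw [hw, Function.update_self]
      exact hq
    · rw [Function.update_of_ne hw]
      exact hc1 w
  · by_cases hw : w = v
    · rw [hw, hz]
      exact Nat.zero_le _
    · exact (hle w hw).trans (hc2 w)

lemma extend_edge {s d : ℕ} {G : SimpleGraph V} {L : V → Finset ℕ}
    (hL : ∀ v, (L v).card = s) {x y : V} (hxy : G.Adj x y)
    (hx : s ≤ dg G x ∧ dg G x < d + s) (hy : s ≤ dg G y ∧ dg G y < d + s)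
    (h : ∃ c : V → ℕ, (∀ v, c v ∈ L v) ∧ ∀ u, dfct (G.deleteEdges {s(x, y)}) c u ≤ d) :
    ∃ c : V → ℕ, (∀ v, c v ∈ L v) ∧ ∀ u, dfct G c u ≤ d := by
  obtain ⟨c, hc1, hc2, hc3⟩ := exists_good_colouring hL h
  refine ⟨c, hc1, ?_⟩
  have key : ∀ x y, G.Adj x y → (s ≤ dg G x ∧ dg G x < d + s) →
      (∀ u, dfct (G.deleteEdges {s(x, y)}) c u = 0 ∨
        dfct (G.deleteEdges {s(x, y)}) c u + s ≤ dg (G.deleteEdges {s(x, y)}) u + 1) →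
      dfct G c x ≤ d := by
    intro x y hxy hx hgood
    have e1 : dg (G.deleteEdges {s(x, y)}) x + 1 ≤ dg G x := by
      rw [dg, dg, ← Finset.card_insert_of_notMem (a := y) (by simp)]
      refine Finset.card_le_card fun u hu => ?_
      rcases Finset.mem_insert.1 hu with rfl | hu
      · exact mem_nb.2 hxy
      · exact mem_nb.2 (deleteEdges_le _ (mem_nb.1 hu))
    have e2 : dfct G c x ≤ dfct (G.deleteEdges {s(x, y)}) c x + 1 := by
      rw [dfct, dfct]
      refine le_trans (Finset.card_le_card (t := insert y ((nb (G.deleteEdges {s(x, y)}) x).filter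
        fun w => c w = c x)) fun u hu => ?_) (Finset.card_insert_le _ _)
      simp only [Finset.mem_filter, mem_nb] at hu
      by_cases huy : u = y
      · simp [huy]
      · refine Finset.mem_insert_of_mem ?_
        simp only [Finset.mem_filter, mem_nb, deleteEdges_adj, Set.mem_singleton_iff]
        refine ⟨⟨hu.1, fun he => huy ?_⟩, hu.2⟩
        exact Sym2.congr_right.1 he
    rcases hgood x with h | h <;> omega
  intro u
  by_cases hux : u = x
  · rw [hux]
    exact key x y hxy hx hc3
  · by_cases huy : u = y
    · rw [huy]
      exact key y x hxy.symm hy (by rw [Sym2.eq_swap]; exact hc3)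
    · refine le_trans (Finset.card_le_card fun w hw => ?_) (hc2 u)
      simp only [Finset.mem_filter, mem_nb, deleteEdges_adj, Set.mem_singleton_iff] at hw ⊢
      refine ⟨⟨hw.1, fun he => ?_⟩, hw.2⟩
      rcases Sym2.eq_iff.1 he with h | h
      · exact hux h.1
      · exact huy h.1

lemma extend_set {s d : ℕ} {G : SimpleGraph V} {L : V → Finset ℕ}
    (hL : ∀ v, (L v).card = s) {S : Finset V} {φ : V → V}
    (hind : ∀ a ∈ S, ∀ b ∈ S, ¬ G.Adj a b) (hdeg : ∀ v ∈ S, dg G v = s)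
    (hφ : ∀ v ∈ S, G.Adj v (φ v))
    (hload : ∀ v ∈ S, (S.filter fun u => φ u = φ v).card ≤ d ∧
      (S.filter fun u => φ u = φ v).card + (nb G (φ v) \ S).card + 1 ≤ d + s)
    (h : ∃ c : V → ℕ, (∀ v, c v ∈ L v) ∧ ∀ u, dfct (strip G S) c u ≤ d) :
    ∃ c : V → ℕ, (∀ v, c v ∈ L v) ∧ ∀ u, dfct G c u ≤ d := by
  obtain ⟨c, hc1, hc2, hc3⟩ := exists_good_colouring hL h
  -- A vertex of `S` with no free colour sees each colour of its list exactly once.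
  have hext : ∀ v ∈ S, ∃ q ∈ L v, ∀ u, G.Adj v u → c u = q → u = φ v := by
    intro v hv
    by_cases hfree : ((nb G v).image c).card < (L v).card
    · obtain ⟨q, hq, hq'⟩ := exists_free_colour hfree
      exact ⟨q, hq, fun u hu hcu => absurd hcu (hq' u hu)⟩
    · by_cases hin : c (φ v) ∈ L v
      · refine ⟨_, hin, fun u hu hcu => ?_⟩
        have hcard : ((nb G v).image c).card = (nb G v).card := by
          have h1 := Finset.card_image_le (s := nb G v) (f := c)
          have h2 := hdeg v hv
          rw [hL] at hfree
          rw [dg] at h2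
          omega
        exact Finset.card_image_iff.1 hcard (by simpa using hu) (by simpa using hφ v hv) hcu
      · have hss : ¬ (L v ⊆ (nb G v).image c) := by
          intro hsub
          have h1 := Finset.card_image_le (s := nb G v) (f := c)
          have h2 := hdeg v hv
          rw [dg] at h2
          have h3 := Finset.eq_of_subset_of_card_le hsub (by rw [hL]; omega)
          rw [h3] at hin
          exact hin (Finset.mem_image_of_mem _ (mem_nb.2 (hφ v hv)))
        obtain ⟨q, hq, hq'⟩ := Finset.not_subset.1 hss
        refine ⟨q, hq, fun u hu hcu => absurd ?_ hq'⟩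
        exact Finset.mem_image.2 ⟨u, mem_nb.2 hu, hcu⟩
  choose! q hq hqφ using hext
  refine ⟨fun v => if v ∈ S then q v else c v, fun v => ?_, fun w => ?_⟩
  · by_cases hv : v ∈ S
    · simp [hv, hq]
    · simp [hv, hc1]
  · by_cases hw : w ∈ S
    · have hpos : 0 < (S.filter fun u => φ u = φ w).card :=
        Finset.card_pos.2 ⟨w, by simp [hw]⟩
      have h1 : dfct G (fun v => if v ∈ S then q v else c v) w ≤ ({φ w} : Finset V).card := by
        refine Finset.card_le_card fun u hu => ?_
        simp only [Finset.mem_filter, mem_nb, hw, if_true] at hu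
        have huS : u ∉ S := fun huS => hind w hw u huS hu.1
        simp only [huS, if_false] at hu
        simpa using hqφ w hw u hu.1 hu.2
      have h2 := (hload w hw).1
      rw [Finset.card_singleton] at h1
      omega
    · have h1 : dfct G (fun v => if v ∈ S then q v else c v) w ≤
          dfct (strip G S) c w + (S.filter fun u => φ u = w).card := by
        refine le_trans (Finset.card_le_card fun u hu => ?_) (Finset.card_union_le _ _)
        simp only [Finset.mem_filter, mem_nb, hw, if_false] at hu
        by_cases huS : u ∈ S
        · simp only [huS, if_true] at hu
          refine Finset.mem_union_right _ ?_
          simp only [Finset.mem_filter]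
          exact ⟨huS, (hqφ u huS w hu.1.symm hu.2.symm).symm⟩
        · simp only [huS, if_false] at hu
          refine Finset.mem_union_left _ ?_
          simp only [Finset.mem_filter, mem_nb]
          exact ⟨⟨hu.1, hw, huS⟩, hu.2⟩
      rcases Nat.eq_zero_or_pos (S.filter fun u => φ u = w).card with h0 | hpos
      · have := hc2 w
        omega
      · obtain ⟨v, hv⟩ := Finset.card_pos.1 hpos
        obtain ⟨hvS, rfl⟩ := Finset.mem_filter.1 hv
        have h2 := hload v hvS
        have h3 : dg (strip G S) (φ v) ≤ (nb G (φ v) \ S).card := by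
          refine Finset.card_le_card fun u hu => ?_
          have hu' : (strip G S).Adj (φ v) u := mem_nb.1 hu
          simp [hu'.1, hu'.2.2]
        rcases hc3 (φ v) with h | h <;> omega

/-- If every `K_{s+1}`-minor-free graph with an edge has one of the three reducible
configurations, then all these graphs have list colourings of defect at most `d`. -/
theorem exists_colouring_of_reducible {s d : ℕ}
    (hred : ∀ G : SimpleGraph V, MinorFree s G → (∃ x y, G.Adj x y) →
      RedLow s G ∨ RedEdge s d G ∨ RedSet s d G)
    (hs : 1 ≤ s) {L : V → Finset ℕ} (hL : ∀ v, (L v).card = s)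
    {G : SimpleGraph V} (hG : MinorFree s G) :
    ∃ c : V → ℕ, (∀ v, c v ∈ L v) ∧ ∀ u, dfct G c u ≤ d := by
  induction hn : ec G using Nat.strong_induction_on generalizing G with
  | _ n ih =>
    subst hn
    by_cases hE : ∃ x y, G.Adj x y
    · rcases hred G hG hE with ⟨v, hv0, hv⟩ | ⟨x, y, hxy, hx, hy⟩ |
        ⟨S, φ, ⟨v, hv⟩, hind, hdeg, hφ, hload⟩
      · obtain ⟨w, hw⟩ := exists_adj_of_dg_pos hv0
        refine extend_low hL hv (ih _ ?_ (hG.mono (strip_le _ _)) rfl)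
        exact ec_lt_of_le (strip_le _ _) hw fun h => by simpa using h.2.1
      · refine extend_edge hL hxy hx hy (ih _ ?_ (hG.mono (deleteEdges_le _)) rfl)
        exact ec_lt_of_le (deleteEdges_le _) hxy fun h => by simp at h
      · refine extend_set hL hind hdeg hφ hload (ih _ ?_ (hG.mono (strip_le _ _)) rfl)
        exact ec_lt_of_le (strip_le _ _) (hφ v hv) fun h => h.2.1 hv
    · have hne : ∀ v, ∃ q, q ∈ L v := fun v => Finset.card_pos.1 (by rw [hL]; omega)
      choose c hc using hne
      refine ⟨c, hc, fun u => ?_⟩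
      have : dfct G c u = 0 := by
        rw [dfct, Finset.card_eq_zero, Finset.filter_eq_empty_iff]
        intro w hw
        exact absurd ⟨u, w, mem_nb.1 hw⟩ hE
      omega

end Colouring

/-! ### Hall's theorem with capacities, and unions of stars -/

section Hall

open scoped Classical

/-- A deficiency form of Hall's theorem with capacities: take a maximal set
`S'` violating Hall's condition, and match the complement `S₁ = S \ S'` away from the
neighbourhood of `S'`. -/
lemma exists_assignment {S : Finset V} (hne : S.Nonempty) (N : V → Finset V) (cap : V → ℕ)
    (h : S.card ≤ ∑ w ∈ S.biUnion N, cap w) :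
    ∃ S₁ ⊆ S, S₁.Nonempty ∧ ∃ φ : V → V,
      (∀ v ∈ S₁, φ v ∈ N v ∧ φ v ∉ (S \ S₁).biUnion N) ∧
      ∀ w, (S₁.filter fun v => φ v = w).card ≤ cap w := by
  obtain ⟨S', hS', hmax⟩ := Finset.exists_max_image
    (S.powerset.filter fun T => T = ∅ ∨ ∑ w ∈ T.biUnion N, cap w < T.card) Finset.card
    ⟨∅, by simp⟩
  simp only [Finset.mem_filter, Finset.mem_powerset] at hS' hmax
  obtain ⟨hsub, hS'⟩ := hS'
  have hle : ∑ w ∈ S'.biUnion N, cap w ≤ S'.card := by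
    rcases hS' with rfl | h
    · simp
    · exact h.le
  have hSS : S \ (S \ S') = S' := Finset.sdiff_sdiff_eq_self hsub
  have hHall : ∀ X ⊆ S \ S', X.card ≤ ∑ w ∈ X.biUnion N \ S'.biUnion N, cap w := by
    intro X hX
    by_contra hcon
    push Not at hcon
    have hXne : 0 < X.card := by omega
    have hdisj : Disjoint S' X :=
      Finset.disjoint_left.2 fun a ha hb => (Finset.mem_sdiff.1 (hX hb)).2 ha
    have hcard := Finset.card_union_of_disjoint hdisj
    have hsum : ∑ w ∈ (S' ∪ X).biUnion N, cap w =
        ∑ w ∈ S'.biUnion N, cap w + ∑ w ∈ X.biUnion N \ S'.biUnion N, cap w := by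
      rw [Finset.union_biUnion, ← Finset.union_sdiff_self_eq_union,
        Finset.sum_union Finset.disjoint_sdiff]
    have := hmax (S' ∪ X) ⟨Finset.union_subset hsub (hX.trans Finset.sdiff_subset),
      Or.inr (by omega)⟩
    omega
  have hne₁ : (S \ S').Nonempty := by
    rw [Finset.sdiff_nonempty]
    intro hSsub
    have : S' = S := Finset.Subset.antisymm hsub hSsub
    subst this
    rcases hS' with h0 | h0
    · exact hne.ne_empty h0
    · omega
  obtain ⟨f, hinj, hf⟩ := (Finset.all_card_le_biUnion_card_iff_exists_injective
    (fun v : {v // v ∈ S \ S'} =>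
      (N v.1 \ S'.biUnion N).sigma fun w => Finset.range (cap w))).1 (by
      intro Y
      have h1 := hHall (Y.map (Function.Embedding.subtype _)) (by
        intro v hv
        obtain ⟨y, -, rfl⟩ := Finset.mem_map.1 hv
        exact y.2)
      rw [Finset.card_map] at h1
      refine h1.trans ?_
      have h2 : ((((Y.map (Function.Embedding.subtype _)).biUnion N) \ S'.biUnion N).sigma
          fun w => Finset.range (cap w)).card =
          ∑ w ∈ (Y.map (Function.Embedding.subtype _)).biUnion N \ S'.biUnion N, cap w := by
        simp
      rw [← h2]
      refine Finset.card_le_card ?_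
      rintro ⟨w, i⟩ hw
      simp only [Finset.mem_sigma, Finset.mem_sdiff, Finset.mem_biUnion, Finset.mem_map] at hw ⊢
      obtain ⟨⟨⟨v, ⟨y, hy, rfl⟩, hwv⟩, hnot⟩, hi⟩ := hw
      exact ⟨y, hy, ⟨hwv, hnot⟩, hi⟩)
  refine ⟨S \ S', Finset.sdiff_subset, hne₁,
    fun v => if hv : v ∈ S \ S' then (f ⟨v, hv⟩).1 else v, ?_, ?_⟩
  · intro v hv
    have := hf ⟨v, hv⟩
    rw [hSS]
    simp only [hv, dif_pos]
    simp only [Finset.mem_sigma, Finset.mem_sdiff] at this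
    exact this.1
  · intro w
    rw [← Finset.card_range (cap w)]
    refine Finset.card_le_card_of_injOn
      (fun v => if hv : v ∈ S \ S' then (f ⟨v, hv⟩).2 else 0) ?_ ?_
    · intro v hv
      obtain ⟨hv1, hv2⟩ := Finset.mem_filter.1 (Finset.mem_coe.1 hv)
      simp only [hv1, dif_pos] at hv2
      have := (Finset.mem_sigma.1 (hf ⟨v, hv1⟩)).2
      rw [hv2] at this
      simp only [hv1, dif_pos]
      exact this
    · intro u hu v hv huv
      obtain ⟨hu1, hu2⟩ := Finset.mem_filter.1 (Finset.mem_coe.1 hu)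
      obtain ⟨hv1, hv2⟩ := Finset.mem_filter.1 (Finset.mem_coe.1 hv)
      simp only [hu1, hv1, dif_pos] at hu2 hv2 huv
      have := hinj (Sigma.ext (hu2.trans hv2.symm) (heq_of_eq huv))
      exact congrArg Subtype.val this

/-- The stars in `N v` centred at `φ v`, for `v ∈ S`, where all `N v` have `k + 1` elements, have
on average at least `k / (k + 1)` edges per covered vertex: in adding the stars one at a time, each
new star with a new centre has `k` new edges and at most `k + 1` new vertices, while a
new star with an old centre has at least as many new edges as new vertices. -/
lemma star_count {k : ℕ} (S : Finset V) (N : V → Finset V) (φ : V → V)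
    (hφ : ∀ v ∈ S, φ v ∈ N v) (hN : ∀ v ∈ S, (N v).card = k + 1) :
    k * (S.biUnion N).card ≤
      (k + 1) * (S.biUnion fun v => ((N v).erase (φ v)).image fun u => s(φ v, u)).card := by
  induction S using Finset.induction_on with
  | empty => simp
  | insert v S hv ih =>
    have ih' := ih (fun u hu => hφ u (by simp [hu])) (fun u hu => hN u (by simp [hu]))
    have hφv := hφ v (by simp)
    have hNv := hN v (by simp)
    rw [Finset.biUnion_insert, Finset.biUnion_insert, Finset.union_comm (N v),
      Finset.union_comm (Finset.image _ _), ← Finset.union_sdiff_self_eq_union,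
      Finset.card_union_of_disjoint Finset.disjoint_sdiff]
    set B := S.biUnion N with hB
    set F := S.biUnion fun v => ((N v).erase (φ v)).image fun u => s(φ v, u) with hF
    have hFB : ∀ a b, s(a, b) ∈ F → a ∈ B ∧ b ∈ B := by
      intro a b hab
      simp only [hF, Finset.mem_biUnion, Finset.mem_image, Finset.mem_erase] at hab
      obtain ⟨w, hw, u, hu, he⟩ := hab
      have h1 : φ w ∈ B := Finset.mem_biUnion.2 ⟨w, hw, hφ w (by simp [hw])⟩
      have h2 : u ∈ B := Finset.mem_biUnion.2 ⟨w, hw, hu.2⟩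
      rcases Sym2.eq_iff.1 he with ⟨rfl, rfl⟩ | ⟨rfl, rfl⟩
      · exact ⟨h1, h2⟩
      · exact ⟨h2, h1⟩
    have hadd : ∀ T ⊆ (N v).erase (φ v), (φ v ∉ B ∨ Disjoint T B) →
        F.card + T.card ≤ (F ∪ ((N v).erase (φ v)).image fun u => s(φ v, u)).card := by
      intro T hT hor
      rw [← card_star (φ v) T, ← Finset.card_union_of_disjoint]
      · exact Finset.card_le_card (Finset.union_subset_union_right (Finset.image_subset_image hT))
      · rw [Finset.disjoint_left]
        intro e he he'
        obtain ⟨u, hu, rfl⟩ := Finset.mem_image.1 he'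
        rcases hor with h | h
        · exact h (hFB _ _ he).1
        · exact Finset.disjoint_left.1 h hu (hFB _ _ he).2
    by_cases hc : φ v ∈ B
    · have h1 := hadd (N v \ B) (by
        intro u hu
        rw [Finset.mem_sdiff] at hu
        refine Finset.mem_erase.2 ⟨?_, hu.1⟩
        rintro rfl
        exact hu.2 hc) (Or.inr Finset.sdiff_disjoint)
      nlinarith
    · have h1 := hadd _ (Finset.Subset.refl _) (Or.inl hc)
      rw [Finset.card_erase_of_mem hφv, hNv, Nat.add_sub_cancel] at h1
      have h2 : (N v \ B).card ≤ k + 1 := hNv ▸ Finset.card_le_card Finset.sdiff_subset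
      nlinarith

end Hall

/-! ### Density of graphs without small clique minors -/

section SmallDensity

open scoped Classical

lemma contract_mem {G : SimpleGraph V} {v x : V} {T : Finset V} (hvx : G.Adj v x)
    (hT : ∀ a b, G.Adj a b → a ∈ T) (a b : V) (h : (contract G v x).Adj a b) : a ∈ T.erase v := by
  obtain ⟨-, hav, -, h⟩ := h
  refine Finset.mem_erase.2 ⟨hav, ?_⟩
  rcases h with h | ⟨rfl, h⟩ | ⟨rfl, h⟩
  · exact hT _ _ h
  · exact hT _ _ hvx.symm
  · exact hT _ _ h.symm

variable [Fintype V]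

lemma ec_contract_common {G : SimpleGraph V} {v x : V} (hvx : G.Adj v x) :
    ec G ≤ ec (contract G v x) + ((nb G v).filter fun u => G.Adj x u).card + 1 := by
  have h1 := ec_contract hvx
  have h2 : dg G v ≤ ((nb G v).filter fun u => u ≠ x ∧ ¬ G.Adj x u).card +
      ((nb G v).filter fun u => G.Adj x u).card + 1 := by
    have hsub : nb G v ⊆ insert x (((nb G v).filter fun u => u ≠ x ∧ ¬ G.Adj x u) ∪
        ((nb G v).filter fun u => G.Adj x u)) := by
      intro u hu
      simp only [Finset.mem_insert, Finset.mem_union, Finset.mem_filter]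
      tauto
    exact (Finset.card_le_card hsub).trans ((Finset.card_insert_le _ _).trans
      (Nat.succ_le_succ (Finset.card_union_le _ _)))
  omega

/-- Graphs with no `K_3` minor are forests, so they have fewer edges than vertices. -/
lemma ec_le_two {G : SimpleGraph V} (hG : MinorFree 2 G) {T : Finset V} (hne : T.Nonempty)
    (hT : ∀ a b, G.Adj a b → a ∈ T) : ec G + 1 ≤ T.card := by
  induction hn : T.card using Nat.strong_induction_on generalizing T G with
  | _ n ih =>
    subst hn
    by_cases hE : ∃ v x, G.Adj v x
    · obtain ⟨v, x, hvx⟩ := hE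
      have h0 : ((nb G v).filter fun u => G.Adj x u).card = 0 := by
        rw [Finset.card_eq_zero, Finset.filter_eq_empty_iff]
        intro u hu hxu
        rw [mem_nb] at hu
        refine not_minorFree_of_clique (s := 2) (G := G) {v, x, u} ?_ ?_ hG
        · rw [Finset.card_eq_three.2 ⟨v, x, u, hvx.ne, hu.ne, hxu.ne, rfl⟩]
        · intro a ha b hb hab
          simp only [Finset.mem_insert, Finset.mem_singleton] at ha hb
          rcases ha with rfl | rfl | rfl <;> rcases hb with rfl | rfl | rfl <;>
            first
            | exact absurd rfl hab
            | assumption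
            | (apply SimpleGraph.Adj.symm; assumption)
      have h1 := ec_contract_common hvx
      have hvT := hT _ _ hvx
      have hcard := Finset.card_erase_add_one hvT
      have h2 := ih (T.erase v).card (by omega) (hG.contract (by norm_num) hvx)
        ⟨x, Finset.mem_erase.2 ⟨hvx.ne', hT _ _ hvx.symm⟩⟩ (contract_mem hvx hT) rfl
      omega
    · have h0 : ec G = 0 := by
        rw [ec, Finset.card_eq_zero, Finset.eq_empty_iff_forall_notMem]
        intro e he
        induction e using Sym2.ind with
        | _ a b => exact hE ⟨a, b, mem_es.1 he⟩
      have := Finset.card_pos.2 hne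
      omega

/-- The neighbourhood of a vertex in a graph with no `K_{s+2}` minor has no `K_{s+1}` minor. -/
lemma MinorFree.neighbourhood {s : ℕ} (hs : 1 ≤ s) {G : SimpleGraph V} (hG : MinorFree (s + 1) G)
    (v : V) : MinorFree s (strip G (univ \ nb G v)) := by
  rintro ⟨B, h1, h2, h3, h4⟩
  have hv : ∀ a, v ∉ B a :=
    notMem_of_isolated hs (G := strip G (univ \ nb G v)) (fun u hu => hu.2.1 (by simp)) h2 h4
  have hnt : Nontrivial (Fin (s + 1)) := Fin.nontrivial_iff_two_le.2 (by omega)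
  have hnb : ∀ a, ∃ x ∈ B a, G.Adj v x := by
    intro a
    obtain ⟨b, hb⟩ := exists_ne a
    obtain ⟨x, hx, y, -, hxy⟩ := h4 a b hb.symm
    refine ⟨x, hx, ?_⟩
    simpa using hxy.2.1
  refine hG ⟨fun a => Fin.cases {v} B a, ?_, ?_, ?_, ?_⟩
  · intro a
    cases a using Fin.cases with
    | zero => exact Set.singleton_nonempty v
    | succ a => exact h1 a
  · intro a
    cases a using Fin.cases with
    | zero =>
      rw [SimpleGraph.connected_iff]
      refine ⟨?_, ⟨⟨v, rfl⟩⟩⟩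
      rintro ⟨x, rfl⟩ ⟨y, rfl⟩
      exact Reachable.refl _
    | succ a => exact (h2 a).mono (G' := G.induce (B a)) fun x y hxy =>
      (strip_le G _ hxy : G.Adj x.1 y.1)
  · intro a b hab
    cases a using Fin.cases with
    | zero =>
      cases b using Fin.cases with
      | zero => exact absurd rfl hab
      | succ b => exact Set.disjoint_singleton_left.2 (hv b)
    | succ a =>
      cases b using Fin.cases with
      | zero => exact Set.disjoint_singleton_right.2 (hv a)
      | succ b => exact h3 fun h => hab (congrArg Fin.succ h)
  · intro a b hab
    cases a using Fin.cases with
    | zero =>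
      cases b using Fin.cases with
      | zero => exact absurd rfl hab
      | succ b =>
        obtain ⟨x, hx, hvx⟩ := hnb b
        exact ⟨v, rfl, x, hx, hvx⟩
    | succ a =>
      cases b using Fin.cases with
      | zero =>
        obtain ⟨x, hx, hvx⟩ := hnb a
        exact ⟨x, hx, v, rfl, hvx.symm⟩
      | succ b =>
        obtain ⟨x, hx, y, hy, hxy⟩ := h4 a b fun h => hab (congrArg Fin.succ h)
        exact ⟨x, hx, y, hy, hxy.1⟩

/-- Graphs with no `K_4` minor have at most twice as many edges as vertices: either some edge lies
in at most one triangle and can be contracted, or the neighbourhood of a vertex has minimum degree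
at least two, whereas it is a forest. -/
lemma ec_le_three {G : SimpleGraph V} (hG : MinorFree 3 G) {T : Finset V}
    (hT : ∀ a b, G.Adj a b → a ∈ T) : ec G ≤ 2 * T.card := by
  induction hn : T.card using Nat.strong_induction_on generalizing T G with
  | _ n ih =>
    subst hn
    by_cases hE : ∃ v x, G.Adj v x
    · by_cases hcom : ∃ v x, G.Adj v x ∧ ((nb G v).filter fun u => G.Adj x u).card ≤ 1
      · obtain ⟨v, x, hvx, hle⟩ := hcom
        have h1 := ec_contract_common hvx
        have hcard := Finset.card_erase_add_one (hT _ _ hvx)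
        have h2 := ih (T.erase v).card (by omega) (hG.contract (by norm_num) hvx)
          (contract_mem hvx hT) rfl
        omega
      · exfalso
        push Not at hcom
        obtain ⟨v, x, hvx⟩ := hE
        have hmem : ∀ a b, (strip G (univ \ nb G v)).Adj a b → a ∈ nb G v := by
          intro a b hab
          simpa using hab.2.1
        have h1 := ec_le_two (hG.neighbourhood (by norm_num) v) ⟨x, mem_nb.2 hvx⟩ hmem
        have h2 := sum_dg_eq hmem
        have h3 : ∑ u ∈ nb G v, 2 ≤ ∑ u ∈ nb G v, dg (strip G (univ \ nb G v)) u := by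
          refine Finset.sum_le_sum fun u hu => ?_
          rw [mem_nb] at hu
          refine (hcom v u hu).trans_le (Finset.card_le_card fun w hw => ?_)
          simp only [Finset.mem_filter, mem_nb] at hw
          refine mem_nb.2 ⟨hw.2, ?_, ?_⟩
          · simp [hu]
          · simp [hw.1]
        rw [Finset.sum_const, smul_eq_mul] at h3
        omega
    · have h0 : ec G = 0 := by
        rw [ec, Finset.card_eq_zero, Finset.eq_empty_iff_forall_notMem]
        intro e he
        induction e using Sym2.ind with
        | _ a b => exact hE ⟨a, b, mem_es.1 he⟩
      omega

end SmallDensity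

section LowerBound

open scoped Classical

/-- The join of `K_k` with `n` isolated vertices. -/
def cone (k n : ℕ) : SimpleGraph (Fin k ⊕ Fin n) where
  Adj a b := a ≠ b ∧ (a.isLeft = true ∨ b.isLeft = true)
  symm := ⟨fun _ _ h => ⟨h.1.symm, h.2.symm⟩⟩
  loopless := ⟨fun _ h => h.1 rfl⟩

lemma cone_minorFree (k n : ℕ) : MinorFree (k + 1) (cone k n) := by
  rintro ⟨B, h1, h2, h3, h4⟩
  let I : Finset (Fin (k + 1 + 1)) := univ.filter fun a => ∃ i : Fin k, Sum.inl i ∈ B a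
  have hI : I.card ≤ k := by
    have hex : ∀ a ∈ I, ∃ x ∈ (univ : Finset (Fin k)).image Sum.inl, x ∈ B a := by
      intro a ha
      simpa [I] using ha
    have : Nonempty (Fin k ⊕ Fin n) := ⟨(h1 0).some⟩
    choose! f hf using hex
    have h := Finset.card_le_card_of_injOn f (fun a ha => (hf a ha).1) (by
      intro a ha b hb hab
      by_contra hne
      refine Set.disjoint_left.1 (h3 hne) (hf a ha).2 ?_
      rw [hab]
      exact (hf b hb).2)
    refine h.trans (Finset.card_image_le.trans ?_)
    simp
  have hc : 1 < Iᶜ.card := by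
    rw [Finset.card_compl, Fintype.card_fin]
    omega
  obtain ⟨a, ha, b, hb, hab⟩ := Finset.one_lt_card.1 hc
  obtain ⟨x, hx, y, hy, -, hxy⟩ := h4 a b hab
  have hl : ∀ (z : Fin k ⊕ Fin n) (c : Fin (k + 1 + 1)), c ∈ Iᶜ → z ∈ B c → z.isLeft = true →
      False := by
    intro z c hcI hz hzl
    obtain ⟨i, rfl⟩ := Sum.isLeft_iff.1 hzl
    exact (Finset.mem_compl.1 hcI) (by simpa [I] using ⟨i, hz⟩)
  rcases hxy with h | h
  · exact hl x a ha hx h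
  · exact hl y b hb hy h

lemma le_ncard_cone (k n : ℕ) : k * n ≤ (cone k n).edgeSet.ncard := by
  rw [← ec_eq_ncard]
  have h : ((univ : Finset (Fin k × Fin n)).image fun p =>
      s((Sum.inl p.1 : Fin k ⊕ Fin n), Sum.inr p.2)).card = k * n := by
    rw [Finset.card_image_of_injective, Finset.card_univ, Fintype.card_prod, Fintype.card_fin,
      Fintype.card_fin]
    rintro ⟨a, b⟩ ⟨a', b'⟩ hab
    rcases Sym2.eq_iff.1 hab with ⟨h1, h2⟩ | ⟨h1, h2⟩
    · simp only [Sum.inl.injEq, Sum.inr.injEq] at h1 h2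
      rw [h1, h2]
    · simp at h1
  rw [← h]
  refine Finset.card_le_card fun e he => ?_
  obtain ⟨p, -, rfl⟩ := Finset.mem_image.1 he
  exact mem_es.2 ⟨by simp, by simp⟩

/-- The density constant for `K_{s+1}`-minor-free graphs is at least `s - 1`. -/
lemma le_density {k : ℕ} {δ : ℝ}
    (hdens : ∀ (W : Type) [Fintype W] (H : SimpleGraph W),
      ¬ IsMinor (⊤ : SimpleGraph (Fin (k + 1 + 1))) H →
        (H.edgeSet.ncard : ℝ) ≤ δ * (Fintype.card W : ℝ)) : (k : ℝ) ≤ δ := by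
  by_contra hlt
  push Not at hlt
  obtain ⟨n, hn⟩ := exists_nat_gt (δ * k / (k - δ))
  have h1 := hdens _ (cone k n) (cone_minorFree k n)
  have h2 : ((k * n : ℕ) : ℝ) ≤ ((cone k n).edgeSet.ncard : ℝ) := by
    exact_mod_cast le_ncard_cone k n
  rw [div_lt_iff₀ (by linarith)] at hn
  simp only [Fintype.card_sum, Fintype.card_fin, Nat.cast_add, Nat.cast_mul] at h1 h2
  nlinarith

end LowerBound

/-! ### The capacity inequality -/

section Numerics

/-- The numerical heart of the case `δ ≤ s`. Here `a = |S|`, `b'` is the number of neighbours of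
`S`, `Q` is the number of edges of the contracted graph not meeting the other low vertices, `C` is
the total capacity of the neighbours of `S`, `τ` the sum of the numbers of their neighbours outside
`S`, and `b₁` the number of them having fewer than `s - 1` such neighbours. -/
lemma capacity_bound {s d : ℕ} {δ a b' b₁ Q C τ : ℝ} (hs : 4 ≤ s ∨ (s = 3 ∧ δ = 2))
    (hδ₁ : (s : ℝ) - 1 ≤ δ) (hμ₁ : (d : ℝ) + s - 1 ≤ δ * (2 * δ - s + 1))
    (hμ₂ : δ * (2 * δ - s + 1) < d + s)
    (hb' : 0 ≤ b') (hb₁ : 0 ≤ b₁)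
    (hd : ((s : ℝ) - 1) * (s - 2) ≤ d)
    (hQ : ((s : ℝ) - 1) * b' ≤ s * Q) (hba : b' ≤ s * a)
    (hτ : τ ≤ δ * (2 * δ - s + 1) * b' - (2 * δ - s - 1) * Q - 2 * a)
    (hC₁ : d * b₁ ≤ C) (hC₂ : (d + s - 1) * b' ≤ C + τ + (s - 1) * b₁) : a ≤ C := by
  by_contra hlt
  push Not at hlt
  have h1 : ((s : ℝ) - 1) * (s - 2) * b₁ < a :=
    lt_of_le_of_lt ((mul_le_mul_of_nonneg_right hd hb₁).trans hC₁) hlt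
  have h2 : (d + s - 1 - δ * (2 * δ - s + 1)) * b' + (2 * δ - s - 1) * Q + a
      - (s - 1) * b₁ < 0 := by linarith
  rcases hs with hs | ⟨rfl, rfl⟩
  · rcases hs.eq_or_lt with rfl | hs
    · norm_num at *
      have hQ0 : 3 / 4 * b' ≤ Q := by linarith
      have h3 : (2 * δ - 4 - 1) * (3 / 4 * b') ≤ (2 * δ - 4 - 1) * Q :=
        mul_le_mul_of_nonneg_left hQ0 (by linarith)
      have h4 : -(1 / 8) ≤ (d + 4 - 1 - δ * (2 * δ - 4 + 1)) + (2 * δ - 4 - 1) * (3 / 4) := by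
        by_cases hδ : (31 / 10 : ℝ) ≤ δ
        · nlinarith
        · push Not at hδ
          have hd' : (6 : ℝ) ≤ d := by exact_mod_cast hd
          nlinarith [mul_nonneg (sub_nonneg.2 hδ₁) (sub_nonneg.2 hδ.le)]
      have h5 := mul_le_mul_of_nonneg_right h4 hb'
      nlinarith
    · have hs5 : (5 : ℝ) ≤ s := by exact_mod_cast hs
      have hQ0 : 0 ≤ Q := by
        by_contra hneg
        push Not at hneg
        nlinarith
      have h3 : b' ≤ (2 * δ - s - 1) * Q := by
        have e1 : ((s : ℝ) - 3) * Q ≤ (2 * δ - s - 1) * Q :=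
          mul_le_mul_of_nonneg_right (by linarith) hQ0
        have e2 : (s : ℝ) * b' ≤ s * (((s : ℝ) - 3) * Q) := by
          have e3 : ((s : ℝ) - 3) * (((s : ℝ) - 1) * b') ≤ (s - 3) * (s * Q) :=
            mul_le_mul_of_nonneg_left hQ (by linarith)
          have e4 : (s : ℝ) * b' ≤ ((s : ℝ) - 3) * (((s : ℝ) - 1) * b') := by
            have : (s : ℝ) ≤ ((s : ℝ) - 3) * ((s : ℝ) - 1) := by nlinarith
            nlinarith [mul_le_mul_of_nonneg_right this hb']
          linarith
        have e5 := le_of_mul_le_mul_left e2 (by linarith)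
        linarith
      have h4 : ((s : ℝ) - 1) * b₁ ≤ ((s : ℝ) - 1) * (s - 2) * b₁ := by
        have : (s : ℝ) - 1 ≤ (s - 1) * (s - 2) := by nlinarith
        exact mul_le_mul_of_nonneg_right this hb₁
      have h5 : -b' ≤ (d + s - 1 - δ * (2 * δ - s + 1)) * b' := by nlinarith
      linarith
  · norm_num at *
    have : (d : ℝ) = 2 := by
      have e1 : d < 3 := by
        have : (d : ℝ) < 3 := by linarith
        exact_mod_cast this
      have e2 : 2 ≤ d := by exact_mod_cast hd
      have : d = 2 := by omega
      rw [this]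
      norm_num
    rw [this] at h2
    norm_num at h2
    linarith

end Numerics

/-! ### Finding a reducible configuration -/

section Structure

open scoped Classical

variable [Fintype V]

/-- The non-isolated vertices of degree at most `d + s - 1`. -/
noncomputable def low (s d : ℕ) (G : SimpleGraph V) : Finset V :=
  univ.filter fun v => 0 < dg G v ∧ dg G v < d + s

/-- The vertices of degree at least `d + s`. -/
noncomputable def high (s d : ℕ) (G : SimpleGraph V) : Finset V :=
  univ.filter fun v => d + s ≤ dg G v

lemma mem_low {s d : ℕ} {G : SimpleGraph V} {v : V} :
    v ∈ low s d G ↔ 0 < dg G v ∧ dg G v < d + s := by simp [low]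

lemma mem_high {s d : ℕ} {G : SimpleGraph V} {v : V} :
    v ∈ high s d G ↔ d + s ≤ dg G v := by simp [high]

lemma low_or_high (s d : ℕ) {G : SimpleGraph V} {a b : V} (h : G.Adj a b) :
    a ∈ low s d G ∨ a ∈ high s d G := by
  rw [mem_low, mem_high]
  have := dg_pos h
  omega

lemma disjoint_low_high (s d : ℕ) (G : SimpleGraph V) : Disjoint (low s d G) (high s d G) := by
  rw [Finset.disjoint_left]
  intro v hv hv'
  rw [mem_low] at hv
  rw [mem_high] at hv'
  omega

lemma le_dg_of_adj {s : ℕ} {G : SimpleGraph V} (hlow : ¬ RedLow s G) {a b : V} (h : G.Adj a b) :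
    s ≤ dg G a := by
  by_contra hlt
  exact hlow ⟨a, dg_pos h, by omega⟩

lemma low_independent {s d : ℕ} {G : SimpleGraph V} (hlow : ¬ RedLow s G)
    (hedge : ¬ RedEdge s d G) :
    ∀ a ∈ low s d G, ∀ b ∈ low s d G, ¬ G.Adj a b := by
  intro a ha b hb hab
  rw [mem_low] at ha hb
  exact hedge ⟨a, b, hab, ⟨le_dg_of_adj hlow hab, ha.2⟩, ⟨le_dg_of_adj hlow hab.symm, hb.2⟩⟩

lemma high_of_adj_low {s d : ℕ} {G : SimpleGraph V} (hlow : ¬ RedLow s G)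
    (hedge : ¬ RedEdge s d G) {a b : V} (ha : a ∈ low s d G) (h : G.Adj a b) :
    b ∈ high s d G := by
  rcases low_or_high s d h.symm with hb | hb
  · exact absurd h (low_independent hlow hedge a ha b hb)
  · exact hb

lemma high_nonempty {s d : ℕ} {G : SimpleGraph V} (hlow : ¬ RedLow s G)
    (hedge : ¬ RedEdge s d G) (hE : ∃ x y, G.Adj x y) : (high s d G).Nonempty := by
  obtain ⟨x, y, hxy⟩ := hE
  rcases low_or_high s d hxy with h | h
  · exact ⟨y, high_of_adj_low hlow hedge h hxy⟩
  · exact ⟨x, h⟩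

lemma sum_low_add_sum_high (s d : ℕ) (G : SimpleGraph V) :
    ∑ v ∈ low s d G, dg G v + ∑ v ∈ high s d G, dg G v = 2 * ec G := by
  rw [← Finset.sum_union (disjoint_low_high s d G)]
  refine sum_dg_eq fun a b hab => ?_
  rw [Finset.mem_union]
  exact low_or_high s d hab

/-- When `δ(δ + 1) < d + s`, contracting all low vertices gives too few edges for the
high vertices. -/
lemma reducible_of_large {s d : ℕ} {δ : ℝ} (hs : 1 ≤ s) (hδ : 1 ≤ δ)
    (hμ : δ * (δ + 1) < d + s) (hdens : Dens V s δ) {G : SimpleGraph V} (hG : MinorFree s G)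
    (hE : ∃ x y, G.Adj x y) : RedLow s G ∨ RedEdge s d G := by
  by_contra hcon
  push Not at hcon
  obtain ⟨hlow, hedge⟩ := hcon
  obtain ⟨H, φ, h1, h2, -, -, -, h6⟩ := contraction hs hG (low s d G)
    (low_independent hlow hedge) (by
      intro v hv
      obtain ⟨w, hw⟩ := exists_adj_of_dg_pos (mem_low.1 hv).1
      exact le_dg_of_adj hlow hw)
  have hB := Finset.card_pos.2 (high_nonempty hlow hedge hE)
  have e1 := hdens H (high s d G) h1 (by
    intro a b hab
    obtain ⟨ha, c, hc⟩ := h2 a b hab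
    exact (low_or_high s d hc).resolve_left ha)
  have e2 := hdens G (low s d G ∪ high s d G) hG (by
    intro a b hab
    rw [Finset.mem_union]
    exact low_or_high s d hab)
  rw [Finset.card_union_of_disjoint (disjoint_low_high s d G)] at e2
  have e3 := sum_low_add_sum_high s d G
  have e4 := ec_strip G (low s d G) (low_independent hlow hedge)
  have e5 : (high s d G).card * (d + s) ≤ ∑ v ∈ high s d G, dg G v := by
    rw [← smul_eq_mul, ← Finset.sum_const]
    exact Finset.sum_le_sum fun v hv => mem_high.1 hv
  generalize (∑ v ∈ low s d G, dg G v) = SA at *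
  generalize (∑ v ∈ high s d G, dg G v) = SB at *
  generalize (low s d G).card = a at *
  generalize (high s d G).card = b at *
  generalize ec (strip G (low s d G)) = X at *
  have f1 : (X : ℝ) + a ≤ ec H := by
    have : X + a ≤ ec H := by omega
    exact_mod_cast this
  have f2 : (SB : ℝ) = ec G + X := by
    have : SB = ec G + X := by omega
    exact_mod_cast this
  have f3 : (b : ℝ) * (d + s) ≤ SB := by exact_mod_cast e5
  have f4 : (0 : ℝ) < b := by exact_mod_cast hB
  have f5 : (0 : ℝ) ≤ X := Nat.cast_nonneg X
  push_cast at e2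
  have f6 : δ * a ≤ δ * (δ * b - X) := mul_le_mul_of_nonneg_left (by linarith) (by linarith)
  have f7 : X ≤ δ * X := le_mul_of_one_le_left f5 hδ
  nlinarith

/-- When `s - 1 ≤ δ ≤ s`, contract only the set `S` of vertices of degree exactly `s`. In the
absence of the other configurations, counting edges shows that the neighbours of `S`
have enough capacity for an assignment as in `RedSet`. -/
lemma reducible_of_small {s d : ℕ} {δ : ℝ} (hs : 4 ≤ s ∨ (s = 3 ∧ δ = 2))
    (hδ₁ : (s : ℝ) - 1 ≤ δ) (hδ₂ : δ ≤ s) (hμ₁ : (d : ℝ) + s - 1 ≤ δ * (2 * δ - s + 1))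
    (hμ₂ : δ * (2 * δ - s + 1) < d + s) (hdens : Dens V s δ) {G : SimpleGraph V}
    (hG : MinorFree s G) (hE : ∃ x y, G.Adj x y) :
    RedLow s G ∨ RedEdge s d G ∨ RedSet s d G := by
  by_cases hlow : RedLow s G
  · exact Or.inl hlow
  by_cases hedge : RedEdge s d G
  · exact Or.inr (Or.inl hedge)
  refine Or.inr (Or.inr ?_)
  have hs3 : 3 ≤ s := by omega
  have hs3' : (3 : ℝ) ≤ s := by exact_mod_cast hs3
  have hind := low_independent hlow hedge
  have hd : ((s : ℝ) - 1) * (s - 2) ≤ d := by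
    have h1 : ((s : ℝ) - 1) * (s - 1) < d + s := by nlinarith
    obtain ⟨r, rfl⟩ : ∃ r, s = r + 1 := ⟨s - 1, by omega⟩
    push_cast at h1 ⊢
    have h2 : r * r < d + (r + 1) := by
      have : (r : ℝ) * r < d + (r + 1) := by linarith
      exact_mod_cast this
    have h3 : r * r ≤ d + r := by omega
    have h4 : (r : ℝ) * r ≤ d + r := by exact_mod_cast h3
    linarith
  -- `S` and `A` are the low vertices of degree exactly `s` and at least `s + 1`.
  obtain ⟨S, hSdef⟩ : ∃ S, S = (low s d G).filter fun v => dg G v = s := ⟨_, rfl⟩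
  obtain ⟨A, hAdef⟩ : ∃ A, A = (low s d G).filter fun v => ¬ dg G v = s := ⟨_, rfl⟩
  obtain ⟨B, hBdef⟩ : ∃ B, B = high s d G := ⟨_, rfl⟩
  have hSlow : ∀ v ∈ S, v ∈ low s d G := fun v hv => by
    rw [hSdef] at hv
    exact (Finset.mem_filter.1 hv).1
  have hSdeg : ∀ v ∈ S, dg G v = s := fun v hv => by
    rw [hSdef] at hv
    exact (Finset.mem_filter.1 hv).2
  have hAlow : ∀ v ∈ A, v ∈ low s d G := fun v hv => by
    rw [hAdef] at hv
    exact (Finset.mem_filter.1 hv).1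
  have hAdeg : ∀ v ∈ A, s + 1 ≤ dg G v := fun v hv => by
    obtain ⟨w, hw⟩ := exists_adj_of_dg_pos (mem_low.1 (hAlow v hv)).1
    have h1 := le_dg_of_adj hlow hw
    rw [hAdef] at hv
    have h2 := (Finset.mem_filter.1 hv).2
    omega
  have hSA : ∀ v ∈ low s d G, v ∈ S ∨ v ∈ A := by
    intro v hv
    rw [hSdef, hAdef, Finset.mem_filter, Finset.mem_filter]
    tauto
  have hSind : ∀ a ∈ S, ∀ b ∈ S, ¬ G.Adj a b :=
    fun a ha b hb => hind a (hSlow a ha) b (hSlow b hb)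
  have hAind : ∀ a ∈ A, ∀ b ∈ A, ¬ G.Adj a b :=
    fun a ha b hb => hind a (hAlow a ha) b (hAlow b hb)
  have hBlow : ∀ v ∈ B, v ∉ low s d G := fun v hv hv' =>
    Finset.disjoint_left.1 (disjoint_low_high s d G) hv' (hBdef ▸ hv)
  have hSB : ∀ v ∈ S, ∀ u, G.Adj v u → u ∈ B := fun v hv u hu =>
    hBdef ▸ high_of_adj_low hlow hedge (hSlow v hv) hu
  obtain ⟨H, φ, hH, h2, h3, h4, -, h6⟩ := contraction (by omega) hG S hSind
    (fun v hv => (hSdeg v hv).ge)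
  rw [Finset.sum_congr rfl hSdeg, Finset.sum_const, smul_eq_mul] at h6
  have hEle := hdens H (B ∪ A) hH (by
    intro a b hab
    obtain ⟨ha, c, hc⟩ := h2 a b hab
    rw [Finset.mem_union]
    rcases low_or_high s d hc with h | h
    · exact Or.inr ((hSA a h).resolve_left ha)
    · exact Or.inl (hBdef ▸ h))
  have hdisjBA : Disjoint B A :=
    Finset.disjoint_left.2 fun v hv hv' => hBlow v hv (hAlow v hv')
  rw [Finset.card_union_of_disjoint hdisjBA] at hEle
  -- `F` consists of the star edges created by the contractions; its edges join vertices of `B`,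
  -- so it is disjoint from the set of edges at `A`, all of which survive in `H`.
  obtain ⟨F, hF⟩ : ∃ F, F = S.biUnion fun v => ((nb G v).erase (φ v)).image fun u => s(φ v, u) :=
    ⟨_, rfl⟩
  obtain ⟨B', hB'⟩ : ∃ B', B' = S.biUnion fun v => nb G v := ⟨_, rfl⟩
  have hB'B : B' ⊆ B := by
    intro u hu
    rw [hB'] at hu
    obtain ⟨v, hv, huv⟩ := Finset.mem_biUnion.1 hu
    exact hSB v hv u (mem_nb.1 huv)
  have hstrip := ec_strip G A hAind
  have hFD : F.card + ∑ v ∈ A, dg G v ≤ ec H := by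
    have e1 : (es G \ es (strip G A)).card = ∑ v ∈ A, dg G v := by
      rw [Finset.card_sdiff_of_subset (es_mono (strip_le G A))]
      simp only [ec] at hstrip
      omega
    rw [← e1, ← Finset.card_union_of_disjoint]
    · refine Finset.card_le_card (Finset.union_subset ?_ ?_)
      · intro e he
        rw [hF] at he
        simp only [Finset.mem_biUnion, Finset.mem_image, Finset.mem_erase, mem_nb] at he
        obtain ⟨v, hv, u, hu, rfl⟩ := he
        exact mem_es.2 ((h4 v hv).2 u hu.2 hu.1)
      · intro e he
        induction e using Sym2.ind with
        | _ a b =>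
          rw [Finset.mem_sdiff, mem_es, mem_es, mem_edgeSet, mem_edgeSet] at he
          obtain ⟨hab, hnot⟩ := he
          refine mem_es.2 (h3 a b (fun ha => ?_) (fun hb => ?_) hab)
          · refine hnot ⟨hab, fun haA => ?_, fun hbA => hind a (hSlow a ha) b (hAlow b hbA) hab⟩
            have := hAdeg a haA
            have := hSdeg a ha
            omega
          · refine hnot ⟨hab, fun haA => hind a (hAlow a haA) b (hSlow b hb) hab, fun hbA => ?_⟩
            have := hAdeg b hbA
            have := hSdeg b hb
            omega
    · rw [Finset.disjoint_left]
      intro e he he'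
      rw [hF] at he
      simp only [Finset.mem_biUnion, Finset.mem_image, Finset.mem_erase, mem_nb] at he
      obtain ⟨v, hv, u, hu, rfl⟩ := he
      rw [Finset.mem_sdiff, mem_es, mem_es, mem_edgeSet, mem_edgeSet] at he'
      refine he'.2 ⟨he'.1, fun h => ?_, fun h => ?_⟩
      · exact hBlow _ (hSB v hv _ (h4 v hv).1) (hAlow _ h)
      · exact hBlow _ (hSB v hv _ hu.2) (hAlow _ h)
  have hstar : ((s : ℝ) - 1) * B'.card ≤ s * F.card := by
    have := star_count (k := s - 1) S (fun v => nb G v) φ (fun v hv => mem_nb.2 (h4 v hv).1)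
      (fun v hv => by
        have := hSdeg v hv
        rw [dg] at this
        omega)
    rw [← hF, ← hB', show s - 1 + 1 = s by omega] at this
    have hcast : (((s - 1 : ℕ) : ℝ)) * B'.card ≤ s * F.card := by exact_mod_cast this
    rwa [Nat.cast_sub (by omega), Nat.cast_one] at hcast
  -- The edges between `B` and `S` number `s|S|`, as all neighbours of `S` lie in `B`.
  have hsumB : ∑ w ∈ B, (nb G w \ S).card + 2 * (S.card * s) + ∑ v ∈ A, dg G v = 2 * ec G := by
    have e1 := sum_low_add_sum_high s d G
    rw [← Finset.sum_filter_add_sum_filter_not (low s d G) (fun v => dg G v = s), ← hSdef,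
      ← hAdef, Finset.sum_congr rfl hSdeg, Finset.sum_const, smul_eq_mul, ← hBdef] at e1
    have e2 : ∑ w ∈ B, dg G w = ∑ w ∈ B, (nb G w \ S).card + ∑ w ∈ B, (nb G w ∩ S).card := by
      rw [← Finset.sum_add_distrib]
      exact Finset.sum_congr rfl fun w _ => (Finset.card_sdiff_add_card_inter _ _).symm
    have e3 : ∑ w ∈ B, (nb G w ∩ S).card = S.card * s := by
      have e4 := Finset.sum_card_bipartiteAbove_eq_sum_card_bipartiteBelow (s := B) (t := S)
        (fun w v => G.Adj w v)
      have e5 : ∀ w, (nb G w ∩ S) = Finset.bipartiteAbove (fun w v => G.Adj w v) S w := by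
        intro w
        ext v
        simp [Finset.mem_bipartiteAbove, and_comm]
      have e6 : ∀ v ∈ S, (Finset.bipartiteBelow (fun w v => G.Adj w v) B v).card = s := by
        intro v hv
        rw [← hSdeg v hv, dg]
        congr 1
        ext w
        simp only [Finset.mem_bipartiteBelow, mem_nb]
        exact ⟨fun h => h.2.symm, fun h => ⟨hSB v hv w h, h.symm⟩⟩
      rw [Finset.sum_congr rfl e6, Finset.sum_const, smul_eq_mul] at e4
      rw [← e4]
      exact Finset.sum_congr rfl fun w _ => by rw [e5]
    omega
  have hsumB' : ∑ w ∈ B', (nb G w \ S).card + (B.card - B'.card) * (d + s) ≤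
      ∑ w ∈ B, (nb G w \ S).card := by
    rw [← Finset.sum_sdiff hB'B, add_comm, ← Finset.card_sdiff_of_subset hB'B, ← smul_eq_mul,
      ← Finset.sum_const]
    refine Nat.add_le_add_right (Finset.sum_le_sum fun w hw => ?_) _
    obtain ⟨hwB, hwB'⟩ := Finset.mem_sdiff.1 hw
    have e1 : nb G w \ S = nb G w := by
      rw [Finset.sdiff_eq_self_iff_disjoint, Finset.disjoint_left]
      intro v hv hvS
      refine hwB' ?_
      rw [hB']
      exact Finset.mem_biUnion.2 ⟨v, hvS, mem_nb.2 (mem_nb.1 hv).symm⟩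
    rw [e1]
    rw [hBdef] at hwB
    exact mem_high.1 hwB
  have hD : A.card * (s + 1) ≤ ∑ v ∈ A, dg G v := by
    rw [← smul_eq_mul, ← Finset.sum_const]
    exact Finset.sum_le_sum hAdeg
  have hBB' := Finset.card_le_card hB'B
  have hBpos : 0 < B.card := by
    rw [hBdef]
    exact Finset.card_pos.2 (high_nonempty hlow hedge hE)
  -- Each vertex of `A` has degree at least `s + 1`, so the edges at `A` number at most
  -- `2δ - s + 1` times their excess over `δ|A|`; the density bound for `H` controls this excess.
  have hkey : ((∑ w ∈ B', (nb G w \ S).card : ℕ) : ℝ) + (d + s - δ * (2 * δ - s + 1)) *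
      ((B.card : ℝ) - B'.card) ≤ δ * (2 * δ - s + 1) * B'.card -
        (2 * δ - s - 1) * ((ec H : ℝ) - (∑ v ∈ A, dg G v : ℕ)) - 2 * S.card := by
    generalize (∑ v ∈ A, dg G v) = D at *
    generalize (∑ w ∈ B', (nb G w \ S).card) = τ at *
    generalize (∑ w ∈ B, (nb G w \ S).card) = σ at *
    have f1 : (ec G : ℝ) + S.card ≤ ec H + S.card * s := by exact_mod_cast h6
    have f2 : (σ : ℝ) + 2 * (S.card * s) + D = 2 * ec G := by exact_mod_cast hsumB
    have f3 : (τ : ℝ) + ((B.card : ℝ) - B'.card) * (d + s) ≤ σ := by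
      rw [← Nat.cast_sub hBB']
      exact_mod_cast hsumB'
    have f4 : (A.card : ℝ) * (s + 1) ≤ D := by exact_mod_cast hD
    push_cast at hEle
    have f5 : (D : ℝ) ≤ (2 * δ - s + 1) * (D - δ * A.card) := by
      have g1 : (2 * δ - s + 1) * δ ≤ (2 * δ - s) * (s + 1) := by
        nlinarith [mul_nonneg (sub_nonneg.2 hδ₂)
          (show (0 : ℝ) ≤ s - 1 - 2 * (s - δ) by linarith)]
      have g2 := mul_le_mul_of_nonneg_right g1 (Nat.cast_nonneg (α := ℝ) A.card)
      have g3 := mul_le_mul_of_nonneg_left f4 (show 0 ≤ 2 * δ - (s : ℝ) by linarith)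
      nlinarith
    have f6 : (2 * δ - s + 1) * (D - δ * A.card) ≤
        (2 * δ - s + 1) * (δ * B.card - (ec H - D)) :=
      mul_le_mul_of_nonneg_left (by linarith) (by linarith)
    nlinarith
  have hQF : (F.card : ℝ) ≤ (ec H : ℝ) - (∑ v ∈ A, dg G v : ℕ) := by
    have : ((F.card + ∑ v ∈ A, dg G v : ℕ) : ℝ) ≤ ec H := by exact_mod_cast hFD
    rw [Nat.cast_add] at this
    linarith
  generalize (ec H : ℝ) - (∑ v ∈ A, dg G v : ℕ) = Q at hkey hQF
  have hQ0 : 0 ≤ Q := le_trans (Nat.cast_nonneg _) hQF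
  have hBBr : (0 : ℝ) ≤ (B.card : ℝ) - B'.card := by
    rw [sub_nonneg]
    exact_mod_cast hBB'
  have hSne : S.Nonempty := by
    by_contra hemp
    rw [Finset.not_nonempty_iff_eq_empty] at hemp
    have hB'0 : B' = ∅ := by rw [hB', hemp, Finset.biUnion_empty]
    rw [hB'0, hemp] at hkey
    simp only [Finset.sum_empty, Finset.card_empty, Nat.cast_zero] at hkey
    have : (0 : ℝ) < B.card := by exact_mod_cast hBpos
    nlinarith [mul_pos (sub_pos.2 hμ₂) this,
      mul_nonneg (show (0 : ℝ) ≤ 2 * δ - s - 1 by linarith) hQ0]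
  have hcapsum : S.card ≤ ∑ w ∈ S.biUnion (fun v => nb G v),
      min d (d + s - 1 - (nb G w \ S).card) := by
    rw [← hB']
    have hreal : (S.card : ℝ) ≤
        ((∑ w ∈ B', min d (d + s - 1 - (nb G w \ S).card) : ℕ) : ℝ) := by
      refine capacity_bound (s := s) (d := d) (δ := δ) (b' := B'.card) (Q := Q)
        (b₁ := ((B'.filter fun w => (nb G w \ S).card < s - 1).card : ℕ))
        (τ := (∑ w ∈ B', (nb G w \ S).card : ℕ))
        hs hδ₁ hμ₁ hμ₂ (Nat.cast_nonneg _) (Nat.cast_nonneg _) hd ?_ ?_ ?_ ?_ ?_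
      · exact hstar.trans (mul_le_mul_of_nonneg_left hQF (Nat.cast_nonneg _))
      · have : B'.card ≤ S.card * s := by
          rw [hB']
          exact Finset.card_biUnion_le_card_mul _ _ _ fun v hv => (hSdeg v hv).le
        rw [mul_comm]
        exact_mod_cast this
      · nlinarith [mul_nonneg (sub_nonneg.2 hμ₂.le) hBBr]
      · have : d * (B'.filter fun w => (nb G w \ S).card < s - 1).card ≤
            ∑ w ∈ B', min d (d + s - 1 - (nb G w \ S).card) := by
          rw [mul_comm, ← smul_eq_mul, ← Finset.sum_const]
          refine le_trans (Finset.sum_le_sum fun w hw => ?_)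
            (Finset.sum_le_sum_of_subset (Finset.filter_subset _ _))
          have := (Finset.mem_filter.1 hw).2
          exact le_min le_rfl (by omega)
        exact_mod_cast this
      · have : B'.card * (d + s - 1) ≤
            ∑ w ∈ B', min d (d + s - 1 - (nb G w \ S).card) + ∑ w ∈ B', (nb G w \ S).card +
              (B'.filter fun w => (nb G w \ S).card < s - 1).card * (s - 1) := by
          rw [← smul_eq_mul (B'.card), ← smul_eq_mul (Finset.card _) (s - 1), ← Finset.sum_const,
            ← Finset.sum_const, Finset.sum_filter, ← Finset.sum_add_distrib,
            ← Finset.sum_add_distrib]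
          refine Finset.sum_le_sum fun w _ => ?_
          split_ifs with h
          · rw [min_eq_left (by omega)]
            omega
          · rw [min_eq_right (by omega)]
            omega
        have h' := (Nat.cast_le (α := ℝ)).2 this
        rw [Nat.cast_mul, Nat.cast_add, Nat.cast_add, Nat.cast_mul, Nat.cast_sub (by omega),
          Nat.cast_sub (by omega), Nat.cast_add, Nat.cast_one] at h'
        linarith
    exact_mod_cast hreal
  obtain ⟨S₁, hS₁, hne₁, ψ, hψ, hload⟩ := exists_assignment hSne (fun v => nb G v)
    (fun w => min d (d + s - 1 - (nb G w \ S).card)) hcapsum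
  refine ⟨S₁, ψ, hne₁, fun a ha b hb => hSind a (hS₁ ha) b (hS₁ hb),
    fun v hv => hSdeg v (hS₁ hv), fun v hv => mem_nb.1 (hψ v hv).1, fun v hv => ?_⟩
  have hl := hload (ψ v)
  have hpos : 0 < (S₁.filter fun u => ψ u = ψ v).card := Finset.card_pos.2 ⟨v, by simp [hv]⟩
  have heq : nb G (ψ v) \ S₁ = nb G (ψ v) \ S := by
    ext u
    simp only [Finset.mem_sdiff, mem_nb]
    refine ⟨fun h => ⟨h.1, fun huS => ?_⟩, fun h => ⟨h.1, fun hu => h.2 (hS₁ hu)⟩⟩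
    exact (hψ v hv).2 (Finset.mem_biUnion.2
      ⟨u, Finset.mem_sdiff.2 ⟨huS, h.2⟩, mem_nb.2 h.1.symm⟩)
  rw [heq]
  have hl1 := hl.trans (min_le_left _ _)
  have hl2 := hl.trans (min_le_right _ _)
  exact ⟨hl1, by omega⟩

end Structure

/-! ### Choosability from reducibility -/

section Assembly

open scoped Classical

variable [Fintype V]

lemma choosable_of_reducible {s d : ℕ} {D : ℤ} (hs : 1 ≤ s) (hdD : (d : ℤ) ≤ D)
    (hred : ∀ G : SimpleGraph V, MinorFree s G → (∃ x y, G.Adj x y) →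
      RedLow s G ∨ RedEdge s d G ∨ RedSet s d G)
    {G : SimpleGraph V} (hG : MinorFree s G) : Choosable G s D := by
  intro L hL
  obtain ⟨c, hc1, hc2⟩ := exists_colouring_of_reducible hred hs hL hG
  refine ⟨c, hc1, fun v => le_trans ?_ hdD⟩
  have : {w | G.Adj v w ∧ c w = c v}.ncard = dfct G c v := by
    rw [dfct, ← Set.ncard_coe_finset]
    congr 1
    ext w
    simp
  rw [this]
  exact_mod_cast hc2 v

lemma redLow_two {G : SimpleGraph V} (hG : MinorFree 2 G) (hE : ∃ x y, G.Adj x y) :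
    RedLow 2 G := by
  by_contra hcon
  obtain ⟨x, y, hxy⟩ := hE
  have hmem : ∀ a b, G.Adj a b → a ∈ univ.filter fun v => 0 < dg G v := by
    intro a b hab
    simpa using dg_pos hab
  have h1 := ec_le_two hG ⟨x, hmem x y hxy⟩ hmem
  have h2 := sum_dg_eq hmem
  have h3 : ∑ v ∈ univ.filter (fun v => 0 < dg G v), 2 ≤
      ∑ v ∈ univ.filter (fun v => 0 < dg G v), dg G v := by
    refine Finset.sum_le_sum fun v hv => ?_
    obtain ⟨w, hw⟩ := exists_adj_of_dg_pos (Finset.mem_filter.1 hv).2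
    exact le_dg_of_adj hcon hw
  rw [Finset.sum_const, smul_eq_mul] at h3
  omega

end Assembly

end DefectiveChoice

/-- If every `K_{s+1}`-minor-free finite simple graph `H` satisfies `|E(H)| ≤ δ|V(H)|`, then
every `K_{s+1}`-minor-free finite simple graph is `(s, ⌊δ(2δ - s + 1)⌋ - s + 1)`-choosable. -/
theorem stmt10 (s : ℕ) (hs : 2 ≤ s) (δ : ℝ) (hδ : 0 < δ)
    (hdens : ∀ (W : Type) [Fintype W] (H : SimpleGraph W),
      ¬ IsMinor (⊤ : SimpleGraph (Fin (s + 1))) H →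
        (H.edgeSet.ncard : ℝ) ≤ δ * (Fintype.card W : ℝ))
    {V : Type} [Fintype V] (G : SimpleGraph V)
    (hG : ¬ IsMinor (⊤ : SimpleGraph (Fin (s + 1))) G) :
    Choosable G s (⌊δ * (2 * δ - (s : ℝ) + 1)⌋ - (s : ℤ) + 1) := by
  classical
  have hδs : (s : ℝ) - 1 ≤ δ := by
    obtain ⟨k, rfl⟩ : ∃ k, s = k + 1 := ⟨s - 1, by omega⟩
    have := DefectiveChoice.le_density hdens
    push_cast
    linarith
  have hdensV : DefectiveChoice.Dens V s δ := DefectiveChoice.dens_of_forall hdens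
  rcases hs.eq_or_lt with rfl | hs3
  · -- forests always have a leaf, so a proper colouring exists
    refine DefectiveChoice.choosable_of_reducible (d := 0) (by norm_num) ?_
      (fun H hH hE => Or.inl (DefectiveChoice.redLow_two hH hE)) hG
    norm_num at hδs
    have : (1 : ℤ) ≤ ⌊δ * (2 * δ - ((2 : ℕ) : ℝ) + 1)⌋ := by
      rw [Int.le_floor]
      push_cast
      nlinarith
    push_cast at *
    linarith
  rcases (Nat.succ_le_of_lt hs3).eq_or_lt with rfl | hs4
  · -- the true density constant `2` gives defect `2`, which is enough as `δ ≥ 2`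
    have hdens3 : DefectiveChoice.Dens V 3 2 := by
      intro H T hH hT
      exact_mod_cast DefectiveChoice.ec_le_three hH hT
    refine DefectiveChoice.choosable_of_reducible (d := 2) (by norm_num) ?_
      (fun H hH hE => DefectiveChoice.reducible_of_small (δ := 2) (Or.inr ⟨rfl, rfl⟩)
        (by norm_num) (by norm_num) (by norm_num) (by norm_num) hdens3 hH hE) hG
    norm_num at hδs
    have : (4 : ℤ) ≤ ⌊δ * (2 * δ - ((Nat.succ 2 : ℕ) : ℝ) + 1)⌋ := by
      rw [Int.le_floor]
      push_cast
      nlinarith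
    push_cast at *
    linarith
  have hs4' : (4 : ℝ) ≤ s := by exact_mod_cast hs4
  have hfl : (s : ℤ) - 1 ≤ ⌊δ * (2 * δ - (s : ℝ) + 1)⌋ := by
    rw [Int.le_floor]
    push_cast
    nlinarith
  obtain ⟨d, hd⟩ := Int.eq_ofNat_of_zero_le
    (show 0 ≤ ⌊δ * (2 * δ - (s : ℝ) + 1)⌋ - (s : ℤ) + 1 by linarith)
  have hdr : ((⌊δ * (2 * δ - (s : ℝ) + 1)⌋ : ℤ) : ℝ) = d + s - 1 := by
    have : ⌊δ * (2 * δ - (s : ℝ) + 1)⌋ = (d : ℤ) + s - 1 := by linarith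
    rw [this]
    push_cast
    ring
  have hμ₁ := Int.floor_le (δ * (2 * δ - (s : ℝ) + 1))
  have hμ₂ := Int.lt_floor_add_one (δ * (2 * δ - (s : ℝ) + 1))
  rw [hdr] at hμ₁ hμ₂
  refine DefectiveChoice.choosable_of_reducible (d := d) (by omega) hd.ge (fun H hH hE => ?_) hG
  by_cases hδ' : δ ≤ s
  · exact DefectiveChoice.reducible_of_small (Or.inl hs4) hδs hδ' hμ₁ (by linarith) hdensV hH hE
  · push Not at hδ'
    have h := DefectiveChoice.reducible_of_large (d := d) (by omega) (by linarith)
      (show δ * (δ + 1) < d + s by nlinarith) hdensV hH hE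
    exact h.elim Or.inl fun h => Or.inr (Or.inl h)
end

section
/- For an integer s ≥ 2, let δ be a positive real such that every finite simple graph H with no K_{s+1} topological minor satisfies |E(H)| ≤ δ|V(H)|. Then every finite simple graph with no K_{s+1} topological minor is (s, ⌊δ(2δ − s + 1)⌋ − s + 1)-choosable. -/
/-!
Fix the defect `d` and call a vertex *light* if its degree is less than `d + s`, *heavy* otherwise.

*Colouring.* A light vertex with more than `d` neighbours of its own colour has at most `s - 2`
other neighbours, so its list contains a colour unused around it; hence only the heavy vertices
matter (`fix_light`). Consequently an edge between two light vertices may be deleted, and a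
vertex with `α` light and `β` heavy neighbours may be coloured last as soon as
`α + (d + 1) β < (d + 1) s` (`Reducible`, `exists_colouring`). It remains to show that every graph
with an edge and no `K_{s+1}` topological minor is reducible.

*Counting.* In an irreducible graph the set `A` of non-isolated light vertices is independent and
each of its vertices has at least `s` neighbours, all in the set `B` of heavy vertices. These
neighbours cannot form a clique, so the vertices of `A` can be suppressed one at a time, each
producing a new edge on `B` (`hasTopMinor_of_suppress`, `card_add_nE_restr_le`). So
`|A| + e(B) ≤ δ |B|`; together with `e(A, B) + e(B) ≤ δ (|A| + |B|)` this gives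
`e(A, B) + (δ + 1) e(B) ≤ δ (δ + 1) |B|`, and some heavy vertex has `α + (δ + 1) / 2 * β` at most
`δ (δ + 1)` (`exists_heavy_of_not_reducible`).

*Contradiction.* The graphs `K_{s-1,N}` show `δ ≥ s - 1` (`le_delta`). For `s ≥ 4`, the bounds
`α + β ≥ d + s` and `α + (d + 1) β ≥ (d + 1) s` then force `α + (δ + 1) / 2 * β > δ (δ + 1)`
(`weight_lt`). For `s = 2, 3` the argument is run with `s - 1` in place of `δ` and
`d = (s - 1) (s - 2)`, which is at most the required defect; the equality case is excluded
because `e ≤ (s - 1) (n - 1)` holds for these `s` (`sparse_of_small`).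
-/

open SimpleGraph

universe u v

/-! ### Topological minors -/

section Top

variable {V : Type}

lemma hasTopMinor_map {W α : Type} {G : SimpleGraph V} {G' : SimpleGraph W} {H : SimpleGraph α}
    (φ : G' →g G) (hφ : Function.Injective φ) (h : HasTopMinor G' H) : HasTopMinor G H := by
  obtain ⟨f, hf, P, h1, h2, h3⟩ := h
  refine ⟨fun a => φ (f a), hφ.comp hf, fun a b hab => (P hab).map φ, ?_, ?_, ?_⟩
  · intro a b hab
    exact ⟨(h1 hab).1.map hφ, trivial⟩
  · intro a b hab c hc
    rw [SimpleGraph.Walk.support_map, List.mem_map] at hc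
    obtain ⟨y, hy, e⟩ := hc
    rw [hφ e] at hy
    exact h2 hab c hy
  · intro a b hab a' b' hab' hne x hx hx'
    rw [SimpleGraph.Walk.support_map, List.mem_map] at hx hx'
    obtain ⟨y, hy, rfl⟩ := hx
    obtain ⟨y', hy', e⟩ := hx'
    rw [hφ e] at hy'
    obtain ⟨p, q⟩ := h3 hab hab' hne y hy hy'
    exact ⟨p.imp (congrArg φ) (congrArg φ), q.imp (congrArg φ) (congrArg φ)⟩

lemma hasTopMinor_mono {α : Type} {G G' : SimpleGraph V} {H : SimpleGraph α}
    (hle : G' ≤ G) (h : HasTopMinor G' H) : HasTopMinor G H :=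
  hasTopMinor_map (SimpleGraph.Hom.ofLE hle) (fun _ _ e => e) h

/-- A complete subgraph on the image of `f` is a subdivision in which no edge is subdivided. -/
lemma hasTopMinor_of_clique {n : ℕ} {G : SimpleGraph V} (f : Fin n → V)
    (hf : ∀ i j, i ≠ j → G.Adj (f i) (f j)) : HasTopMinor G (⊤ : SimpleGraph (Fin n)) := by
  have inj : Function.Injective f := by
    intro i j e
    by_contra hne
    exact (hf i j hne).ne e
  refine ⟨f, inj, fun i j h => (hf i j h.ne).toWalk, ?_, ?_, ?_⟩
  · intro i j h
    exact ⟨by simpa using (hf i j h.ne).ne, trivial⟩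
  · intro i j h c hc
    simp only [SimpleGraph.Adj.toWalk, SimpleGraph.Walk.support_cons,
      SimpleGraph.Walk.support_nil, List.mem_cons, List.not_mem_nil, or_false] at hc
    exact hc.imp (fun e => inj e) (fun e => inj e)
  · intro i j h i' j' h' _ x hx hx'
    simp only [SimpleGraph.Adj.toWalk, SimpleGraph.Walk.support_cons,
      SimpleGraph.Walk.support_nil, List.mem_cons, List.not_mem_nil, or_false] at hx hx'
    exact ⟨hx, hx'⟩

/-- A walk using the new edge `xy` can be rerouted through the vertex `a` adjacent to `x`, `y`. -/
lemma exists_detour {G G' : SimpleGraph V} {a x y : V} (hax : G.Adj a x) (hay : G.Adj a y)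
    (hle : ∀ u v, G'.Adj u v → G.Adj u v ∨ (u = x ∧ v = y) ∨ (u = y ∧ v = x))
    {u v : V} (p : G'.Walk u v) :
    ∃ q : G.Walk u v, ∀ w ∈ q.support,
      w ∈ p.support ∨ (w = a ∧ x ∈ p.support ∧ y ∈ p.support) := by
  induction p with
  | nil => exact ⟨SimpleGraph.Walk.nil, fun w hw => Or.inl hw⟩
  | @cons u v t h p ih =>
    obtain ⟨q, hq⟩ := ih
    have key : ∀ w ∈ q.support, w ∈ (SimpleGraph.Walk.cons h p).support ∨
        (w = a ∧ x ∈ (SimpleGraph.Walk.cons h p).support ∧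
          y ∈ (SimpleGraph.Walk.cons h p).support) := by
      intro w hw
      simp only [SimpleGraph.Walk.support_cons, List.mem_cons]
      rcases hq w hw with h1 | ⟨h1, h2, h3⟩
      · exact Or.inl (Or.inr h1)
      · exact Or.inr ⟨h1, Or.inr h2, Or.inr h3⟩
    have hv : v ∈ p.support := p.start_mem_support
    rcases hle u v h with h1 | ⟨rfl, rfl⟩ | ⟨rfl, rfl⟩
    · refine ⟨SimpleGraph.Walk.cons h1 q, fun w hw => ?_⟩
      rw [SimpleGraph.Walk.support_cons, List.mem_cons] at hw
      rcases hw with rfl | hw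
      · left; simp
      · exact key w hw
    · refine ⟨SimpleGraph.Walk.cons hax.symm (SimpleGraph.Walk.cons hay q), fun w hw => ?_⟩
      simp only [SimpleGraph.Walk.support_cons, List.mem_cons] at hw
      rcases hw with rfl | rfl | hw
      · left; simp
      · right; simp [hv]
      · exact key w hw
    · refine ⟨SimpleGraph.Walk.cons hay.symm (SimpleGraph.Walk.cons hax q), fun w hw => ?_⟩
      simp only [SimpleGraph.Walk.support_cons, List.mem_cons] at hw
      rcases hw with rfl | rfl | hw
      · left; simp
      · right; simp [hv]
      · exact key w hw

/-- Deleting a vertex `a` and joining two of its neighbours `x`, `y` (that is, deleting all but two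
edges at `a` and suppressing `a`) creates no new complete topological minor. -/
lemma hasTopMinor_of_suppress {n : ℕ} (hn : 2 ≤ n) {G : SimpleGraph V} {a x y : V}
    (hax : G.Adj a x) (hay : G.Adj a y) (hxy : x ≠ y)
    (h : HasTopMinor (G.deleteIncidenceSet a ⊔ SimpleGraph.edge x y)
      (⊤ : SimpleGraph (Fin n))) :
    HasTopMinor G (⊤ : SimpleGraph (Fin n)) := by
  obtain ⟨f, hf, P, h1, h2, h3⟩ := h
  have hle : ∀ u v, (G.deleteIncidenceSet a ⊔ SimpleGraph.edge x y).Adj u v →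
      G.Adj u v ∨ (u = x ∧ v = y) ∨ (u = y ∧ v = x) := by
    intro u v huv
    rw [SimpleGraph.sup_adj, SimpleGraph.deleteIncidenceSet_adj, SimpleGraph.edge_adj] at huv
    tauto
  have hiso : ∀ v, ¬ (G.deleteIncidenceSet a ⊔ SimpleGraph.edge x y).Adj a v := by
    intro v hv
    rw [SimpleGraph.sup_adj, SimpleGraph.deleteIncidenceSet_adj, SimpleGraph.edge_adj] at hv
    rcases hv with hv | ⟨⟨e, -⟩ | ⟨e, -⟩, -⟩
    · exact hv.2.1 rfl
    · exact hax.ne e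
    · exact hay.ne e
  -- `a` is isolated in the new graph, so it is not a branch vertex
  have hfa : ∀ i, f i ≠ a := by
    intro i hi
    have : Nontrivial (Fin n) := Fin.nontrivial_iff_two_le.2 hn
    obtain ⟨j, hj⟩ := exists_ne i
    have hij : (⊤ : SimpleGraph (Fin n)).Adj i j := hj.symm
    have hnn : ¬ (P hij).Nil := SimpleGraph.Walk.not_nil_of_ne (fun e => hj (hf e).symm)
    have := SimpleGraph.Walk.adj_snd hnn
    exact hiso (P hij).snd (by simpa only [hi] using this)
  classical
  choose Q hQ using fun (i j : Fin n) (h : (⊤ : SimpleGraph (Fin n)).Adj i j) =>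
    exists_detour hax hay hle (P h)
  have hQ' : ∀ i j h, ∀ w ∈ (Q i j h).bypass.support, w ∈ (P h).support ∨
      (w = a ∧ x ∈ (P h).support ∧ y ∈ (P h).support) := fun i j h w hw =>
    hQ i j h w (SimpleGraph.Walk.support_bypass_subset_support _ hw)
  have haP : ∀ ⦃i j⦄ (h : (⊤ : SimpleGraph (Fin n)).Adj i j), a ∉ (P h).support := by
    intro i j h ha
    have hnn : ¬ (P h).Nil := SimpleGraph.Walk.not_nil_of_ne (fun e => h.ne (hf e))
    obtain ⟨e, he, hae⟩ := (SimpleGraph.Walk.mem_support_iff_exists_mem_edges_of_not_nil hnn).1 ha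
    obtain ⟨b, rfl⟩ := Sym2.mem_iff_exists.1 hae
    exact hiso b ((P h).adj_of_mem_edges he)
  refine ⟨f, hf, fun i j h => (Q i j h).bypass, ?_, ?_, ?_⟩
  · intro i j h
    exact ⟨SimpleGraph.Walk.bypass_isPath _, trivial⟩
  · intro i j h c hc
    rcases hQ' i j h _ hc with h' | ⟨h', -⟩
    · exact h2 h c h'
    · exact absurd h' (hfa c)
  · intro i j h i' j' h' hne w hw hw'
    rcases hQ' i j h _ hw with g | ⟨g, gx, gy⟩
    · rcases hQ' i' j' h' _ hw' with g' | ⟨g', -⟩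
      · exact h3 h h' hne w g g'
      · exact absurd (g' ▸ g) (haP h)
    · rcases hQ' i' j' h' _ hw' with g' | ⟨g', gx', gy'⟩
      · exact absurd (g ▸ g') (haP h')
      · -- two different paths through both `x` and `y` would have the same two ends
        exfalso
        obtain ⟨x1, x2⟩ := h3 h h' hne x gx gx'
        obtain ⟨y1, y2⟩ := h3 h h' hne y gy gy'
        apply hne
        have e1 : s(f i, f j) = s(x, y) := by
          rw [Sym2.eq_iff]; grind
        have e2 : s(f i', f j') = s(x, y) := by
          rw [Sym2.eq_iff]; grind
        have : Sym2.map f s(i, j) = Sym2.map f s(i', j') := by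
          simp only [Sym2.map_mk]; rw [e1, e2]
        exact Sym2.map.injective hf this

/-- In a subdivision of `K_{s+1}`, the second vertices of the `s` paths leaving a branch vertex are
distinct neighbours of that vertex. -/
lemma exists_injective_neighbors {n : ℕ} {G : SimpleGraph V} {f : Fin n → V}
    (hf : Function.Injective f)
    (P : ∀ ⦃a b : Fin n⦄, (⊤ : SimpleGraph (Fin n)).Adj a b → G.Walk (f a) (f b))
    (h3 : ∀ ⦃a b⦄ (h : (⊤ : SimpleGraph (Fin n)).Adj a b) ⦃a' b'⦄
      (h' : (⊤ : SimpleGraph (Fin n)).Adj a' b'), s(a, b) ≠ s(a', b') →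
        ∀ x ∈ (P h).support, x ∈ (P h').support →
          (x = f a ∨ x = f b) ∧ (x = f a' ∨ x = f b')) (i : Fin n) :
    ∃ g : {j // j ≠ i} → V, Function.Injective g ∧ ∀ j, G.Adj (f i) (g j) := by
  have had : ∀ j : {j // j ≠ i}, (⊤ : SimpleGraph (Fin n)).Adj i j := fun j => j.2.symm
  have hnn : ∀ j, ¬ (P (had j)).Nil := fun j =>
    SimpleGraph.Walk.not_nil_of_ne (fun e => j.2 (hf e).symm)
  refine ⟨fun j => (P (had j)).snd, ?_, fun j => SimpleGraph.Walk.adj_snd (hnn j)⟩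
  intro j k e
  by_contra hne
  have hjk : (j : Fin n) ≠ k := fun e => hne (Subtype.ext e)
  have hs : s(i, (j : Fin n)) ≠ s(i, (k : Fin n)) := fun e => hjk (Sym2.congr_right.1 e)
  have hadj := SimpleGraph.Walk.adj_snd (hnn j)
  have := h3 (had j) (had k) hs _ (SimpleGraph.Walk.getVert_mem_support _ 1)
    (by
      have : (P (had j)).snd = (P (had k)).snd := e
      change (P (had j)).snd ∈ _
      rw [this]; exact SimpleGraph.Walk.getVert_mem_support _ 1)
  obtain ⟨a1, a2⟩ := this
  rcases a1 with a1 | a1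
  · exact hadj.ne a1.symm
  rcases a2 with a2 | a2
  · exact hadj.ne a2.symm
  · exact hjk (hf (a1.symm.trans a2))

/-- `K_{s-1,N}` has no `K_{s+1}` topological minor, because some branch vertex would have degree at
most `s - 1`; its density tends to `s - 1`. -/
lemma le_delta {s : ℕ} (hs : 2 ≤ s) {δ : ℝ}
    (hdens : ∀ (W : Type) [Fintype W] (H : SimpleGraph W),
      ¬ HasTopMinor H (⊤ : SimpleGraph (Fin (s + 1))) →
        (H.edgeSet.ncard : ℝ) ≤ δ * (Fintype.card W : ℝ)) : (s : ℝ) - 1 ≤ δ := by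
  have key : ∀ N : ℕ, ((s : ℝ) - 1) * N ≤ δ * (((s : ℝ) - 1) + N) := by
    intro N
    have htop : ¬ HasTopMinor (completeBipartiteGraph (Fin (s - 1)) (Fin N))
        (⊤ : SimpleGraph (Fin (s + 1))) := by
      rintro ⟨f, hf, P, -, -, h3⟩
      have : ∃ i, ∃ k, f i = Sum.inr k := by
        by_contra hno
        push Not at hno
        have hl : ∀ i, ∃ k, f i = Sum.inl k := by
          intro i
          rcases hfi : f i with k | k
          · exact ⟨k, rfl⟩
          · exact absurd hfi (hno i k)
        choose g hg using hl
        have hgi : Function.Injective g := fun i j e => hf (by rw [hg, hg, e])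
        have := Fintype.card_le_of_injective g hgi
        simp at this
        omega
      obtain ⟨i, k, hik⟩ := this
      obtain ⟨g, hg, hadj⟩ := exists_injective_neighbors hf P h3 i
      have hl : ∀ j, ∃ k, g j = Sum.inl k := by
        intro j
        have := hadj j
        rw [hik] at this
        rcases hfi : g j with k | k
        · exact ⟨k, rfl⟩
        · rw [hfi] at this; simp at this
      choose q hq using hl
      have hqi : Function.Injective q := fun i j e => hg (by rw [hq, hq, e])
      have := Fintype.card_le_of_injective q hqi
      simp [Fintype.card_subtype_compl] at this
      omega
    have h1 := hdens _ _ htop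
    have h2 : (s - 1) * N ≤ (completeBipartiteGraph (Fin (s - 1)) (Fin N)).edgeSet.ncard := by
      let φ : Fin (s - 1) × Fin N → Sym2 (Fin (s - 1) ⊕ Fin N) :=
        fun p => s(Sum.inl p.1, Sum.inr p.2)
      have hφ : Function.Injective φ := by
        rintro ⟨a, b⟩ ⟨c, d⟩ e
        simpa [φ] using e
      have : (Set.range φ).ncard = (s - 1) * N := by
        rw [← Set.image_univ, Set.ncard_image_of_injective _ hφ, Set.ncard_univ]
        simp
      rw [← this]
      refine Set.ncard_le_ncard ?_ (Set.toFinite _)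
      rintro _ ⟨p, rfl⟩
      simp [φ]
    have h3 : (((s - 1) * N : ℕ) : ℝ) ≤ _ := (Nat.cast_le.2 h2).trans h1
    have hs1 : ((s - 1 : ℕ) : ℝ) = (s : ℝ) - 1 := by
      rw [Nat.cast_sub (by omega)]; simp
    simpa [hs1] using h3
  by_contra hlt
  push Not at hlt
  obtain ⟨N, hN⟩ := exists_nat_gt (δ * ((s : ℝ) - 1) / ((s : ℝ) - 1 - δ))
  rw [div_lt_iff₀ (by linarith)] at hN
  have := key N
  nlinarith

end Top

/-! ### Reducible configurations for defective list colouring -/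

section Colouring

open Finset
open scoped Classical

variable {V : Type} [Fintype V]

/-- The neighbourhood of `v`, as a finset. -/
noncomputable def nb (G : SimpleGraph V) (v : V) : Finset V := univ.filter (G.Adj v)

/-- The neighbours of `v` having the colour of `v`; their number is the defect of `c` at `v`. -/
noncomputable def mono (G : SimpleGraph V) (c : V → ℕ) (v : V) : Finset V :=
  (nb G v).filter (fun w => c w = c v)

/-- A vertex of degree less than `d + s`. With lists of size `s`, a light vertex of defect more
than `d` always has a colour in its list that no neighbour uses. -/
def Light (d s : ℕ) (G : SimpleGraph V) (v : V) : Prop := (nb G v).card < d + s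

/-- The light neighbours of `v`. -/
noncomputable def nbL (d s : ℕ) (G : SimpleGraph V) (v : V) : Finset V :=
  (nb G v).filter (Light d s G)

/-- The heavy (that is, not light) neighbours of `v`. -/
noncomputable def nbH (d s : ℕ) (G : SimpleGraph V) (v : V) : Finset V :=
  (nb G v).filter (fun w => ¬ Light d s G w)

/-- `G` has an edge between two light vertices, or a non-isolated vertex with few neighbours, a
heavy neighbour counting `d + 1` times as much as a light one. In either case a colouring of a
proper spanning subgraph yields one of `G`. -/
def Reducible (d s : ℕ) (G : SimpleGraph V) : Prop :=
  (∃ u v, G.Adj u v ∧ Light d s G u ∧ Light d s G v) ∨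
  (∃ b, (∃ w, G.Adj b w) ∧ (nbL d s G b).card + (d + 1) * (nbH d s G b).card < (d + 1) * s)

lemma mem_nb {G : SimpleGraph V} {v w : V} : w ∈ nb G v ↔ G.Adj v w := by simp [nb]

lemma mem_mono {G : SimpleGraph V} {c : V → ℕ} {v w : V} :
    w ∈ mono G c v ↔ G.Adj v w ∧ c w = c v := by simp [mono, mem_nb]

lemma card_nbL_add_card_nbH (d s : ℕ) (G : SimpleGraph V) (v : V) :
    (nbL d s G v).card + (nbH d s G v).card = (nb G v).card :=
  Finset.card_filter_add_card_filter_not _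

/-- If only light vertices have defect more than `d`, recolouring them one by one with a colour
unused in their neighbourhood repairs the colouring. -/
lemma fix_light {d s : ℕ} (G : SimpleGraph V) (L : V → Finset ℕ) (hL : ∀ v, (L v).card = s)
    (c : V → ℕ) (hc : ∀ v, c v ∈ L v) (hh : ∀ v, ¬ Light d s G v → (mono G c v).card ≤ d) :
    ∃ c' : V → ℕ, (∀ v, c' v ∈ L v) ∧ ∀ v, (mono G c' v).card ≤ d := by
  induction hn : (univ.filter fun v => d < (mono G c v).card).card using Nat.strong_induction_on
    generalizing c with
  | _ n ih =>
  by_cases hbad : ∃ v, d < (mono G c v).card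
  swap
  · push Not at hbad
    exact ⟨c, hc, hbad⟩
  obtain ⟨v, hv⟩ := hbad
  have hlight : Light d s G v := by
    by_contra h
    exact absurd (hh v h) (by omega)
  obtain ⟨p, hpL, hp⟩ : ∃ p ∈ L v, p ∉ insert (c v) ((nb G v).image c) := by
    by_contra hno
    push Not at hno
    have hsub : L v ⊆ insert (c v) (((nb G v).filter (fun w => ¬ c w = c v)).image c) := by
      intro p hp
      have := hno p hp
      simp only [mem_insert, mem_image, mem_filter] at this ⊢
      grind
    have h1 := Finset.card_le_card hsub
    have h2 := Finset.card_insert_le (c v) (((nb G v).filter (fun w => ¬ c w = c v)).image c)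
    have h3 : (((nb G v).filter (fun w => ¬ c w = c v)).image c).card ≤ _ := Finset.card_image_le
    have h4 := Finset.card_filter_add_card_filter_not (s := nb G v) (fun w => c w = c v)
    have h5 : d < ((nb G v).filter (fun w => c w = c v)).card := hv
    rw [hL] at h1
    unfold Light at hlight
    omega
  simp only [mem_insert, mem_image, not_or, not_exists, not_and] at hp
  have hmono_v : mono G (Function.update c v p) v = ∅ := by
    ext x
    simp only [mem_mono, Function.update_self, notMem_empty, iff_false, not_and]
    intro hx
    rw [Function.update_of_ne hx.ne']
    exact hp.2 x (mem_nb.2 hx)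
  have hmono : ∀ w, mono G (Function.update c v p) w ⊆ mono G c w := by
    intro w x
    rcases eq_or_ne w v with rfl | hw
    · simp [hmono_v]
    simp only [mem_mono]
    rintro ⟨hx, e⟩
    rw [Function.update_of_ne hw] at e
    rcases eq_or_ne x v with rfl | hxv
    · rw [Function.update_self] at e
      exact absurd e.symm (hp.2 w (mem_nb.2 hx.symm))
    · rw [Function.update_of_ne hxv] at e
      exact ⟨hx, e⟩
  refine ih _ ?_ (Function.update c v p) ?_ ?_ rfl
  · rw [← hn]
    refine Finset.card_lt_card ⟨?_, ?_⟩
    · intro w hw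
      simp only [mem_filter, mem_univ, true_and] at hw ⊢
      exact hw.trans_le (Finset.card_le_card (hmono w))
    · intro hsub
      have : v ∈ univ.filter fun w => d < (mono G (Function.update c v p) w).card :=
        hsub (by simpa using hv)
      simp [hmono_v] at this
  · intro w
    rcases eq_or_ne w v with rfl | hw
    · simpa using hpL
    · simpa [hw] using hc w
  · intro w hw
    exact (Finset.card_le_card (hmono w)).trans (hh w hw)

lemma exists_colouring_of_light_edge {d s : ℕ} {G : SimpleGraph V} {L : V → Finset ℕ}
    (hL : ∀ v, (L v).card = s) {u v : V} (hu : Light d s G u) (hv : Light d s G v)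
    (h : ∃ c : V → ℕ, (∀ v, c v ∈ L v) ∧ ∀ w, (mono (G.deleteEdges {s(u, v)}) c w).card ≤ d) :
    ∃ c : V → ℕ, (∀ v, c v ∈ L v) ∧ ∀ v, (mono G c v).card ≤ d := by
  obtain ⟨c, hc, hd⟩ := h
  refine fix_light G L hL c hc fun w hw => (Finset.card_le_card ?_).trans (hd w)
  intro x hx
  rw [mem_mono] at hx ⊢
  refine ⟨?_, hx.2⟩
  rw [SimpleGraph.deleteEdges_adj]
  refine ⟨hx.1, ?_⟩
  simp only [Set.mem_singleton_iff, Sym2.eq_iff]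
  rintro (⟨rfl, -⟩ | ⟨rfl, -⟩) <;> contradiction

/-- A vertex `b` as in the second case of `Reducible` can be coloured last: by pigeonhole some
colour of its list is absent from its heavy neighbours and occurs at most `d` times on its light
ones. -/
lemma exists_colouring_of_vertex {d s : ℕ} {G : SimpleGraph V} {L : V → Finset ℕ}
    (hL : ∀ v, (L v).card = s) {b : V}
    (hb : (nbL d s G b).card + (d + 1) * (nbH d s G b).card < (d + 1) * s)
    (h : ∃ c : V → ℕ, (∀ v, c v ∈ L v) ∧ ∀ w, (mono (G.deleteIncidenceSet b) c w).card ≤ d) :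
    ∃ c : V → ℕ, (∀ v, c v ∈ L v) ∧ ∀ v, (mono G c v).card ≤ d := by
  obtain ⟨c, hc, hd⟩ := h
  obtain ⟨p, hpL, hpH, hpA⟩ : ∃ p ∈ L b, p ∉ (nbH d s G b).image c ∧
      ((nbL d s G b).filter (fun a => c a = p)).card ≤ d := by
    by_contra hno
    push Not at hno
    have h1 : ∀ p ∈ L b \ (nbH d s G b).image c,
        d + 1 ≤ ((nbL d s G b).filter (fun a => c a = p)).card := by
      intro p hp
      rw [mem_sdiff] at hp
      exact hno p hp.1 hp.2
    have h2 := Finset.card_nsmul_le_sum _ _ _ h1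
    have h3 : ∑ p ∈ L b \ (nbH d s G b).image c, ((nbL d s G b).filter (fun a => c a = p)).card
        ≤ (nbL d s G b).card := by
      rw [← Finset.card_biUnion]
      · refine Finset.card_le_card ?_
        intro x hx
        simp only [mem_biUnion, mem_filter] at hx
        grind
      · intro p _ q _ hpq
        rw [Function.onFun, Finset.disjoint_left]
        intro x hx hx'
        rw [mem_filter] at hx hx'
        exact hpq (hx.2.symm.trans hx'.2)
    have h4 := Finset.le_card_sdiff ((nbH d s G b).image c) (L b)
    have h5 : ((nbH d s G b).image c).card ≤ (nbH d s G b).card := Finset.card_image_le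
    rw [hL] at h4
    have h6 : s ≤ (L b \ (nbH d s G b).image c).card + (nbH d s G b).card := by omega
    rw [smul_eq_mul] at h2
    nlinarith
  simp only [mem_image, not_exists, not_and] at hpH
  refine fix_light G L hL (Function.update c b p) ?_ ?_
  · intro w
    rcases eq_or_ne w b with rfl | hw
    · simpa using hpL
    · simpa [hw] using hc w
  · intro w hw
    rcases eq_or_ne w b with rfl | hwb
    · refine (Finset.card_le_card ?_).trans hpA
      intro x hx
      rw [mem_mono, Function.update_self] at hx
      obtain ⟨hx, e⟩ := hx
      rw [Function.update_of_ne hx.ne'] at e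
      rw [mem_filter]
      refine ⟨?_, e⟩
      by_contra hxl
      refine hpH x ?_ e
      rw [nbL, mem_filter, mem_nb] at hxl
      rw [nbH, mem_filter, mem_nb]
      tauto
    · refine (Finset.card_le_card ?_).trans (hd w)
      intro x hx
      rw [mem_mono, Function.update_of_ne hwb] at hx
      obtain ⟨hx, e⟩ := hx
      rcases eq_or_ne x b with rfl | hxb
      · rw [Function.update_self] at e
        refine absurd e.symm (hpH w ?_)
        rw [nbH, mem_filter, mem_nb]
        exact ⟨hx.symm, hw⟩
      · rw [Function.update_of_ne hxb] at e
        rw [mem_mono, SimpleGraph.deleteIncidenceSet_adj]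
        exact ⟨⟨hx, hwb, hxb⟩, e⟩

lemma exists_colouring {d s : ℕ} (hs : 1 ≤ s) (G : SimpleGraph V) {L : V → Finset ℕ}
    (hL : ∀ v, (L v).card = s) (hred : ∀ G' ≤ G, G' ≠ ⊥ → Reducible d s G') :
    ∃ c : V → ℕ, (∀ v, c v ∈ L v) ∧ ∀ v, (mono G c v).card ≤ d := by
  induction G using WellFoundedLT.induction with
  | _ G ih =>
  rcases eq_or_ne G ⊥ with rfl | hne
  · have : ∀ v, ∃ p, p ∈ L v := by
      intro v
      have : 0 < (L v).card := by rw [hL]; omega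
      exact Finset.card_pos.1 this
    choose c hc using this
    refine ⟨c, hc, fun v => ?_⟩
    have : mono (⊥ : SimpleGraph V) c v = ∅ := by
      ext x; simp [mem_mono]
    simp [this]
  have hrec : ∀ G' < G, ∃ c : V → ℕ, (∀ v, c v ∈ L v) ∧ ∀ v, (mono G' c v).card ≤ d :=
    fun G' h => ih G' h fun K hK => hred K (hK.trans h.le)
  rcases hred G le_rfl hne with ⟨u, v, huv, hu, hv⟩ | ⟨b, ⟨w, hw⟩, hb⟩
  · refine exists_colouring_of_light_edge hL hu hv (hrec _ ?_)
    refine lt_of_le_of_ne (SimpleGraph.deleteEdges_le _) fun e => ?_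
    rw [← e, SimpleGraph.deleteEdges_adj] at huv
    exact huv.2 rfl
  · refine exists_colouring_of_vertex hL hb (hrec _ ?_)
    refine lt_of_le_of_ne (SimpleGraph.deleteIncidenceSet_le _ _) fun e => ?_
    rw [← e, SimpleGraph.deleteIncidenceSet_adj] at hw
    exact hw.2.1 rfl

end Colouring

/-! ### Edge counting in graphs without a `K_{s+1}` topological minor -/

section Counting

open Finset
open scoped Classical

variable {V : Type} [Fintype V]

/-- The subgraph of `G` induced on `B`, as a spanning subgraph. -/
def restr (G : SimpleGraph V) (B : Finset V) : SimpleGraph V where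
  Adj u v := G.Adj u v ∧ u ∈ B ∧ v ∈ B
  symm := ⟨fun _ _ h => ⟨h.1.symm, h.2.2, h.2.1⟩⟩
  loopless := ⟨fun _ h => h.1.ne rfl⟩

/-- All edges of `G` have both ends in `S` (by symmetry it is enough to ask this of one end). -/
def Inside (G : SimpleGraph V) (S : Finset V) : Prop := ∀ u v, G.Adj u v → u ∈ S

lemma restr_le {V : Type} (G : SimpleGraph V) (B : Finset V) : restr G B ≤ G := fun _ _ h => h.1

lemma inside_restr {V : Type} (G : SimpleGraph V) (B : Finset V) : Inside (restr G B) B :=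
  fun _ _ h => h.2.1

/-- The number of edges of `G`. -/
noncomputable def nE (G : SimpleGraph V) : ℕ := G.edgeSet.ncard

lemma nE_eq (G : SimpleGraph V) : nE G = G.edgeFinset.card := by
  rw [nE, ← SimpleGraph.coe_edgeFinset, Set.ncard_coe_finset]

lemma degree_eq_card_nb (G : SimpleGraph V) (v : V) : G.degree v = (nb G v).card := by
  rw [← SimpleGraph.card_neighborFinset_eq_degree]
  congr 1
  ext w
  simp [mem_nb]

lemma nE_deleteIncidenceSet (G : SimpleGraph V) (a : V) :
    nE (G.deleteIncidenceSet a) + (nb G a).card = nE G := by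
  have h := SimpleGraph.card_edgeFinset_deleteIncidenceSet G a
  have h2 : G.degree a ≤ G.edgeFinset.card := G.degree_le_card_edgeFinset a
  rw [nE_eq, nE_eq, ← degree_eq_card_nb]
  convert Nat.sub_add_cancel h2 using 2
  convert h

lemma nE_sup_edge {G : SimpleGraph V} {x y : V} (hxy : x ≠ y) (h : ¬ G.Adj x y) :
    nE (G ⊔ SimpleGraph.edge x y) = nE G + 1 := by
  rw [nE_eq, nE_eq]
  convert SimpleGraph.card_edgeFinset_sup_edge G h hxy

lemma nE_deleteEdge {G : SimpleGraph V} {u v : V} (h : G.Adj u v) :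
    nE (G.deleteEdges {s(u, v)}) + 1 = nE G := by
  rw [nE, nE, SimpleGraph.edgeSet_deleteEdges]
  exact Set.ncard_sdiff_singleton_add_one (by simpa using h) (Set.toFinite _)

lemma sum_card_nb (G : SimpleGraph V) : ∑ v, (nb G v).card = 2 * nE G := by
  rw [nE_eq, ← SimpleGraph.sum_degrees_eq_twice_card_edges]
  exact Finset.sum_congr rfl fun v _ => (degree_eq_card_nb G v).symm

lemma sum_card_nb_of_inside {G : SimpleGraph V} {S : Finset V} (h : Inside G S) :
    ∑ v ∈ S, (nb G v).card = 2 * nE G := by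
  rw [← sum_card_nb]
  refine Finset.sum_subset (Finset.subset_univ _) fun v _ hv => ?_
  rw [Finset.card_eq_zero, Finset.eq_empty_iff_forall_notMem]
  intro w hw
  exact hv (h v w (mem_nb.1 hw))

lemma inside_deleteIncidenceSet {V : Type} {G : SimpleGraph V} {S : Finset V}
    (h : Inside G S) (a : V) : Inside (G.deleteIncidenceSet a) (S.erase a) := by
  intro u v huv
  rw [SimpleGraph.deleteIncidenceSet_adj] at huv
  exact mem_erase.2 ⟨huv.2.1, h u v huv.1⟩

/-- The density hypothesis, applied to the subgraph induced on `S`. -/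
lemma nE_le_of_inside {s : ℕ} {δ : ℝ}
    (hdens : ∀ (W : Type) [Fintype W] (H : SimpleGraph W),
      ¬ HasTopMinor H (⊤ : SimpleGraph (Fin (s + 1))) →
        (H.edgeSet.ncard : ℝ) ≤ δ * (Fintype.card W : ℝ))
    {G : SimpleGraph V} {S : Finset V} (hS : Inside G S)
    (hG : ¬ HasTopMinor G (⊤ : SimpleGraph (Fin (s + 1)))) :
    (nE G : ℝ) ≤ δ * S.card := by
  have h1 := hdens {v // v ∈ S} (G.comap Subtype.val) fun h => hG
    (hasTopMinor_map ⟨Subtype.val, fun h => h⟩ Subtype.val_injective h)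
  have h2 : nE G ≤ (G.comap (Subtype.val : {v // v ∈ S} → V)).edgeSet.ncard := by
    refine (Set.ncard_le_ncard (t := Sym2.map Subtype.val ''
      (G.comap (Subtype.val : {v // v ∈ S} → V)).edgeSet) ?_ (Set.toFinite _)).trans
      (Set.ncard_image_le (Set.toFinite _))
    intro e
    induction e using Sym2.ind with
    | _ u v =>
    intro h
    rw [SimpleGraph.mem_edgeSet] at h
    exact ⟨s(⟨u, hS u v h⟩, ⟨v, hS v u h.symm⟩), h, rfl⟩
  rw [Fintype.card_coe] at h1
  exact (Nat.cast_le.2 h2).trans h1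

/-- A vertex together with `s` pairwise adjacent neighbours would be a `K_{s+1}`. -/
lemma exists_nonadj {s : ℕ} {G : SimpleGraph V}
    (hG : ¬ HasTopMinor G (⊤ : SimpleGraph (Fin (s + 1)))) {a : V} (ha : s ≤ (nb G a).card) :
    ∃ x y, G.Adj a x ∧ G.Adj a y ∧ x ≠ y ∧ ¬ G.Adj x y := by
  by_contra hno
  push Not at hno
  obtain ⟨T, hT, hTs⟩ := Finset.exists_subset_card_eq ha
  let e := T.equivFinOfCardEq hTs
  have hadj : ∀ i, G.Adj a (e.symm i) := fun i => mem_nb.1 (hT (e.symm i).2)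
  refine hG (hasTopMinor_of_clique (Fin.cons a fun i => (e.symm i : V)) ?_)
  intro i j
  refine Fin.cases ?_ (fun i => ?_) i <;> refine Fin.cases ?_ (fun j => ?_) j
  · intro h; exact absurd rfl h
  · intro _; simpa using hadj j
  · intro _; simpa using (hadj i).symm
  · intro h
    simp only [Fin.cons_succ]
    refine hno _ _ (hadj i) (hadj j) fun he => h ?_
    rw [e.symm.injective (Subtype.ext he)]

/-- The graphs without a `K_3`, respectively `K_4`, topological minor are forests, respectively
series-parallel, and the density bound for them is sharper than the general one: a minimal
counterexample has a vertex of degree exactly `s`, and suppressing it gives a smaller one. -/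
lemma sparse_of_small {s : ℕ} (hs : s = 2 ∨ s = 3) (G : SimpleGraph V) (S : Finset V)
    (hne : S.Nonempty) (hS : Inside G S)
    (hG : ¬ HasTopMinor G (⊤ : SimpleGraph (Fin (s + 1)))) :
    nE G + (s - 1) ≤ (s - 1) * S.card := by
  induction hn : S.card + nE G using Nat.strong_induction_on generalizing G S with
  | _ n ih =>
  have hpos : 0 < S.card := Finset.card_pos.2 hne
  have hsum := sum_card_nb_of_inside hS
  rcases Nat.lt_or_ge 1 S.card with hS1 | hS1
  swap
  · have hS1 : S.card = 1 := by omega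
    obtain ⟨v, rfl⟩ := Finset.card_eq_one.1 hS1
    have : nb G v = ∅ := by
      rw [Finset.eq_empty_iff_forall_notMem]
      intro w hw
      rw [mem_nb] at hw
      exact hw.ne (Finset.mem_singleton.1 (hS w v hw.symm)).symm
    simp only [sum_singleton, this, card_empty] at hsum
    rw [card_singleton]
    omega
  by_contra hcon
  by_cases hlow : ∃ v ∈ S, (nb G v).card ≤ s - 1
  · obtain ⟨v, hv, hdeg⟩ := hlow
    have hE := nE_deleteIncidenceSet G v
    have hc := Finset.card_erase_of_mem hv
    have := ih _ (by omega) (G.deleteIncidenceSet v) (S.erase v)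
      (Finset.card_pos.1 (by omega)) (inside_deleteIncidenceSet hS v)
      (fun h => hG (hasTopMinor_mono (SimpleGraph.deleteIncidenceSet_le _ _) h)) rfl
    rw [hc] at this
    rcases hs with rfl | rfl <;> omega
  push Not at hlow
  by_cases hbig : (s - 1) * S.card + 1 < nE G + (s - 1)
  · obtain ⟨v, hv⟩ := hne
    obtain ⟨w, hw⟩ : (nb G v).Nonempty := Finset.card_pos.1 (by have := hlow v hv; omega)
    rw [mem_nb] at hw
    have hE := nE_deleteEdge hw
    have := ih _ (by omega) (G.deleteEdges {s(v, w)}) S ⟨v, hv⟩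
      (fun a b hab => hS a b (SimpleGraph.deleteEdges_le _ hab))
      (fun h => hG (hasTopMinor_mono (SimpleGraph.deleteEdges_le _) h)) rfl
    omega
  obtain ⟨v, hv, hdeg⟩ : ∃ v ∈ S, (nb G v).card = s := by
    by_contra hno
    push Not at hno
    have h1 : ∀ v ∈ S, s + 1 ≤ (nb G v).card := by
      intro v hv
      have := hno v hv
      have := hlow v hv
      omega
    have h2 := Finset.card_nsmul_le_sum _ _ _ h1
    rw [hsum, smul_eq_mul] at h2
    rcases hs with rfl | rfl <;> omega
  obtain ⟨x, y, hx, hy, hxy, hnadj⟩ := exists_nonadj hG hdeg.ge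
  have hE := nE_deleteIncidenceSet G v
  have hE' : nE (G.deleteIncidenceSet v ⊔ SimpleGraph.edge x y) = _ :=
    nE_sup_edge hxy fun h => hnadj (SimpleGraph.deleteIncidenceSet_le _ _ h)
  have hc := Finset.card_erase_of_mem hv
  have := ih _ (by omega) (G.deleteIncidenceSet v ⊔ SimpleGraph.edge x y) (S.erase v)
    (Finset.card_pos.1 (by omega))
    (by
      intro a b hab
      rw [SimpleGraph.sup_adj, SimpleGraph.edge_adj] at hab
      rcases hab with hab | ⟨⟨rfl, -⟩ | ⟨rfl, -⟩, -⟩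
      · exact inside_deleteIncidenceSet hS v a b hab
      · exact mem_erase.2 ⟨hx.ne', hS _ _ hx.symm⟩
      · exact mem_erase.2 ⟨hy.ne', hS _ _ hy.symm⟩)
    (fun h => hG (hasTopMinor_of_suppress (by omega) hx hy hxy h)) rfl
  rw [hc] at this
  rcases hs with rfl | rfl <;> omega

/-- Suppressing the vertices of an independent set `A` one after the other, each onto a missing
edge inside `B`, turns `A` into `|A|` new edges on `B`. -/
lemma card_add_nE_restr_le {s : ℕ} (hs : 1 ≤ s) {δ κ : ℝ}
    (hD : ∀ (G : SimpleGraph V) (S : Finset V), S.Nonempty → Inside G S →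
      ¬ HasTopMinor G (⊤ : SimpleGraph (Fin (s + 1))) → (nE G : ℝ) ≤ δ * S.card - κ)
    (A B : Finset V) (hB : B.Nonempty) (G : SimpleGraph V)
    (hG : ¬ HasTopMinor G (⊤ : SimpleGraph (Fin (s + 1))))
    (hA : ∀ a ∈ A, a ∉ B ∧ (∀ w, G.Adj a w → w ∈ B) ∧ s ≤ (nb G a).card) :
    (A.card : ℝ) + nE (restr G B) ≤ δ * B.card - κ := by
  induction A using Finset.induction_on generalizing G with
  | empty =>
    simp only [card_empty, Nat.cast_zero, zero_add]
    exact hD _ B hB (inside_restr G B) fun h => hG (hasTopMinor_mono (restr_le G B) h)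
  | insert a A haA ih =>
    obtain ⟨haB, haN, hadeg⟩ := hA a (mem_insert_self _ _)
    obtain ⟨x, y, hx, hy, hxy, hnadj⟩ := exists_nonadj hG hadeg
    have hxB := haN x hx
    have hyB := haN y hy
    have hr : restr (G.deleteIncidenceSet a ⊔ SimpleGraph.edge x y) B =
        restr G B ⊔ SimpleGraph.edge x y := by
      ext u v
      simp only [restr, SimpleGraph.sup_adj, SimpleGraph.deleteIncidenceSet_adj,
        SimpleGraph.edge_adj]
      grind
    have := ih (G.deleteIncidenceSet a ⊔ SimpleGraph.edge x y)
      (fun h => hG (hasTopMinor_of_suppress (by omega) hx hy hxy h)) (by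
        intro a' ha'
        obtain ⟨h1, h2, h3⟩ := hA a' (mem_insert_of_mem ha')
        have hadj : ∀ w, (G.deleteIncidenceSet a ⊔ SimpleGraph.edge x y).Adj a' w ↔
            G.Adj a' w := by
          intro w
          have := h2 w
          simp only [SimpleGraph.sup_adj, SimpleGraph.deleteIncidenceSet_adj,
            SimpleGraph.edge_adj]
          grind
        refine ⟨h1, fun w hw => h2 w ((hadj w).1 hw), ?_⟩
        have : nb (G.deleteIncidenceSet a ⊔ SimpleGraph.edge x y) a' = nb G a' := by
          ext w
          rw [mem_nb, mem_nb, hadj]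
        rwa [this])
    rw [hr, nE_sup_edge hxy fun h => hnadj (restr_le G B h)] at this
    rw [card_insert_of_notMem haA]
    push_cast at this ⊢
    linarith

/-- The averaging step: in a nonempty irreducible graph some heavy vertex has small weight, a light
neighbour weighing `1` and a heavy neighbour `(δ + 1) / 2`. -/
lemma exists_heavy_of_not_reducible {d s : ℕ} (hs : 1 ≤ s) {δ κ : ℝ} (hδ : 0 ≤ δ) (hκ : 0 ≤ κ)
    (hD : ∀ (G : SimpleGraph V) (S : Finset V), S.Nonempty → Inside G S →
      ¬ HasTopMinor G (⊤ : SimpleGraph (Fin (s + 1))) → (nE G : ℝ) ≤ δ * S.card - κ)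
    (G : SimpleGraph V) (hG : ¬ HasTopMinor G (⊤ : SimpleGraph (Fin (s + 1)))) (hne : G ≠ ⊥)
    (hred : ¬ Reducible d s G) :
    ∃ b, d + s ≤ (nbL d s G b).card + (nbH d s G b).card ∧
      (d + 1) * s ≤ (nbL d s G b).card + (d + 1) * (nbH d s G b).card ∧
      ((nbL d s G b).card : ℝ) + (δ + 1) / 2 * (nbH d s G b).card ≤ δ * (δ + 1) ∧
      (0 < κ →
        ((nbL d s G b).card : ℝ) + (δ + 1) / 2 * (nbH d s G b).card < δ * (δ + 1)) := by
  rw [Reducible, not_or] at hred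
  push Not at hred
  obtain ⟨hred1, hred2⟩ := hred
  let B : Finset V := univ.filter fun v => ¬ Light d s G v
  let A : Finset V := univ.filter fun v => Light d s G v ∧ ∃ w, G.Adj v w
  have memB : ∀ v, v ∈ B ↔ ¬ Light d s G v := fun v => by simp [B]
  have memA : ∀ v, v ∈ A ↔ Light d s G v ∧ ∃ w, G.Adj v w := fun v => by simp [A]
  have hBne : B.Nonempty := by
    by_contra hB
    rw [Finset.not_nonempty_iff_eq_empty, Finset.eq_empty_iff_forall_notMem] at hB
    refine hne ?_
    ext u v
    simp only [SimpleGraph.bot_adj, iff_false]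
    intro huv
    have hu := hB u
    have hv := hB v
    rw [memB, not_not] at hu hv
    exact hred1 u v huv hu hv
  have hAB : ∀ a ∈ A, ∀ w, G.Adj a w → w ∈ B := by
    intro a ha w haw
    rw [memB]
    exact hred1 a w haw ((memA a).1 ha).1
  have hnbA : ∀ a ∈ A, nbL d s G a = ∅ := by
    intro a ha
    rw [Finset.eq_empty_iff_forall_notMem]
    intro w hw
    rw [nbL, mem_filter, mem_nb] at hw
    exact (memB w).1 (hAB a ha w hw.1) hw.2
  have hdegA : ∀ a ∈ A, s ≤ (nb G a).card := by
    intro a ha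
    obtain ⟨w, hw⟩ := ((memA a).1 ha).2
    have h1 := hred2 a ⟨w, hw⟩
    have h2 := card_nbL_add_card_nbH d s G a
    rw [hnbA a ha, card_empty, zero_add] at h1 h2
    rw [← h2]
    exact Nat.le_of_mul_le_mul_left h1 (by omega)
  have hdisj : Disjoint A B := by
    rw [Finset.disjoint_left]
    intro v hv hv'
    exact (memB v).1 hv' ((memA v).1 hv).1
  have hin : Inside G (A ∪ B) := by
    intro u v huv
    rw [mem_union, memA, memB]
    by_cases h : Light d s G u
    · exact Or.inl ⟨h, v, huv⟩
    · exact Or.inr h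
  have h1 := card_add_nE_restr_le hs hD A B hBne G hG fun a ha =>
    ⟨Finset.disjoint_left.1 hdisj ha, hAB a ha, hdegA a ha⟩
  have h2 := hD G (A ∪ B) (hBne.mono subset_union_right) hin hG
  rw [card_union_of_disjoint hdisj] at h2
  have hsumH : ∑ b ∈ B, (nbH d s G b).card = 2 * nE (restr G B) := by
    rw [← sum_card_nb_of_inside (inside_restr G B)]
    refine Finset.sum_congr rfl fun b hb => ?_
    congr 1
    ext w
    rw [nbH, mem_filter, mem_nb, mem_nb]
    change _ ↔ G.Adj b w ∧ b ∈ B ∧ w ∈ B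
    rw [memB w]
    simp only [hb, true_and]
  have hsumAB : ∑ a ∈ A, (nb G a).card = ∑ b ∈ B, (nbL d s G b).card := by
    have := Finset.sum_card_bipartiteAbove_eq_sum_card_bipartiteBelow (s := A) (t := B) G.Adj
    convert this using 2 with a ha b hb
    · congr 1
      ext w
      rw [mem_nb, Finset.mem_bipartiteAbove]
      exact ⟨fun h => ⟨hAB a ha w h, h⟩, fun h => h.2⟩
    · congr 1
      ext w
      rw [nbL, mem_filter, mem_nb, Finset.mem_bipartiteBelow, memA]
      exact ⟨fun h => ⟨⟨h.2, b, h.1.symm⟩, h.1.symm⟩, fun h => ⟨h.2.symm, h.1.1⟩⟩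
  have hsum := sum_card_nb_of_inside hin
  rw [Finset.sum_union hdisj, hsumAB] at hsum
  have hsumB : ∑ b ∈ B, (nb G b).card =
      ∑ b ∈ B, (nbL d s G b).card + ∑ b ∈ B, (nbH d s G b).card := by
    rw [← Finset.sum_add_distrib]
    exact Finset.sum_congr rfl fun b _ => (card_nbL_add_card_nbH d s G b).symm
  have hE : nE G = ∑ b ∈ B, (nbL d s G b).card + nE (restr G B) := by omega
  have hEr : (nE G : ℝ) = ∑ b ∈ B, ((nbL d s G b).card : ℝ) + nE (restr G B) := by
    rw [hE]; push_cast; rfl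
  have hHr : ∑ b ∈ B, ((nbH d s G b).card : ℝ) = 2 * nE (restr G B) := by
    exact_mod_cast hsumH
  have htotal : ∑ b ∈ B, (((nbL d s G b).card : ℝ) + (δ + 1) / 2 * (nbH d s G b).card) ≤
      ∑ _b ∈ B, δ * (δ + 1) - κ := by
    rw [Finset.sum_add_distrib, ← Finset.mul_sum, hHr, Finset.sum_const, nsmul_eq_mul]
    push_cast at h2
    have := mul_le_mul_of_nonneg_left h1 hδ
    nlinarith [mul_nonneg hδ hκ]
  have hfin : ∃ b ∈ B,
      ((nbL d s G b).card : ℝ) + (δ + 1) / 2 * (nbH d s G b).card ≤ δ * (δ + 1) ∧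
      (0 < κ →
        ((nbL d s G b).card : ℝ) + (δ + 1) / 2 * (nbH d s G b).card < δ * (δ + 1)) := by
    rcases hκ.eq_or_lt with rfl | hκ
    · rw [sub_zero] at htotal
      obtain ⟨b, hb, h⟩ := Finset.exists_le_of_sum_le hBne htotal
      exact ⟨b, hb, h, fun h => absurd h (lt_irrefl _)⟩
    · obtain ⟨b, hb, h⟩ := Finset.exists_lt_of_sum_lt (htotal.trans_lt (by linarith))
      exact ⟨b, hb, h.le, fun _ => h⟩
  obtain ⟨b, hb, h3, h4⟩ := hfin
  have hdeg : d + s ≤ (nb G b).card := by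
    have := (memB b).1 hb
    rw [Light] at this
    omega
  obtain ⟨w, hw⟩ : (nb G b).Nonempty := Finset.card_pos.1 (by omega)
  exact ⟨b, by rw [card_nbL_add_card_nbH]; exact hdeg, hred2 b ⟨w, mem_nb.1 hw⟩, h3, h4⟩

end Counting

/-! ### Weights and the conclusion -/

section Conclusion

variable {V : Type} [Fintype V]

lemma choosable_of_forall_reducible {d s : ℕ} (hs : 1 ≤ s) (G : SimpleGraph V) {D : ℤ}
    (hdD : (d : ℤ) ≤ D) (hred : ∀ G' ≤ G, G' ≠ ⊥ → Reducible d s G') : Choosable G s D := by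
  intro L hL
  obtain ⟨c, hc, hd⟩ := exists_colouring hs G hL hred
  refine ⟨c, hc, fun v => le_trans ?_ hdD⟩
  have : {w | G.Adj v w ∧ c w = c v} = (mono G c v : Set V) := by
    ext w
    simp [mem_mono]
  rw [this, Set.ncard_coe_finset]
  exact_mod_cast hd v

/-- With `t = s - 1` and `s ≥ 4`, a heavy irreducible vertex with `a` light and `b` heavy neighbours
has weight more than `δ (δ + 1)`: `a + (δ + 1) / 2 * b` is a convex combination of `a + b` and
`a + (d + 1) * b`. -/
lemma weight_lt {t δ d a b : ℝ} (ht : 3 ≤ t) (hδ : t ≤ δ)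
    (hd : δ * (2 * δ - t) < d + (t + 1)) (h1 : d + (t + 1) ≤ a + b)
    (h2 : (d + 1) * (t + 1) ≤ a + (d + 1) * b) : δ * (δ + 1) < a + (δ + 1) / 2 * b := by
  have hd1 : δ - 1 < 2 * d := by nlinarith
  have hd0 : 0 < d := by linarith
  have key : 2 * d * (d + (t + 1) + (δ - 1) * t / 2) ≤ 2 * d * (a + (δ + 1) / 2 * b) := by
    have e1 := mul_le_mul_of_nonneg_left h1 (by linarith : 0 ≤ 2 * d - (δ - 1))
    have e2 := mul_le_mul_of_nonneg_left h2 (by linarith : 0 ≤ δ - 1)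
    linarith
  have key2 := le_of_mul_le_mul_left key (by linarith)
  have e3 : 0 ≤ (δ - t) * (δ + t / 2 - 1) := mul_nonneg (by linarith) (by linarith)
  have e4 : 0 ≤ t * (t - 3) := mul_nonneg (by linarith) (by linarith)
  nlinarith

end Conclusion

/-- If every finite simple graph `H` with no `K_{s+1}` topological minor satisfies
`|E(H)| ≤ δ|V(H)|`, then every finite simple graph with no `K_{s+1}` topological minor is
`(s, ⌊δ(2δ - s + 1)⌋ - s + 1)`-choosable. -/
theorem stmt11 (s : ℕ) (hs : 2 ≤ s) (δ : ℝ) (hδ : 0 < δ)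
    (hdens : ∀ (W : Type) [Fintype W] (H : SimpleGraph W),
      ¬ HasTopMinor H (⊤ : SimpleGraph (Fin (s + 1))) →
        (H.edgeSet.ncard : ℝ) ≤ δ * (Fintype.card W : ℝ))
    {V : Type} [Fintype V] (G : SimpleGraph V)
    (hG : ¬ HasTopMinor G (⊤ : SimpleGraph (Fin (s + 1)))) :
    Choosable G s (⌊δ * (2 * δ - (s : ℝ) + 1)⌋ - (s : ℤ) + 1) := by
  have hsδ : (s : ℝ) - 1 ≤ δ := le_delta hs hdens
  have hs2 : (2 : ℝ) ≤ s := by exact_mod_cast hs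
  -- since `δ ≥ s - 1`, the defect is at least `(s - 1)² - (s - 1) = (s - 1) (s - 2)`
  have hfloor : ((s : ℤ) - 1) ^ 2 ≤ ⌊δ * (2 * δ - (s : ℝ) + 1)⌋ := by
    rw [Int.le_floor]
    push_cast
    nlinarith
  by_cases hs4 : 4 ≤ s
  · have hs4' : (4 : ℝ) ≤ s := by exact_mod_cast hs4
    have hnn : 0 ≤ ⌊δ * (2 * δ - (s : ℝ) + 1)⌋ - (s : ℤ) + 1 := by
      have : (4 : ℤ) ≤ s := by exact_mod_cast hs4
      nlinarith
    obtain ⟨d, hd⟩ := Int.eq_ofNat_of_zero_le hnn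
    refine choosable_of_forall_reducible (d := d) (by omega) G hd.ge fun G' hle hne => ?_
    by_contra hred
    obtain ⟨b, h1, h2, h3, -⟩ := exists_heavy_of_not_reducible (δ := δ) (κ := 0) (by omega) hδ.le
      le_rfl (fun G S _ hS hG => by simpa using nE_le_of_inside hdens hS hG) G'
      (fun h => hG (hasTopMinor_mono hle h)) hne hred
    have hdr : δ * (2 * δ - (s : ℝ) + 1) < (d : ℝ) + s := by
      have h := Int.lt_floor_add_one (δ * (2 * δ - (s : ℝ) + 1))
      have e : (⌊δ * (2 * δ - (s : ℝ) + 1)⌋ : ℝ) = d + s - 1 := by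
        have : ⌊δ * (2 * δ - (s : ℝ) + 1)⌋ = (d : ℤ) + s - 1 := by omega
        rw [this]; push_cast; ring
      rw [e] at h
      linarith
    have h1' : (d : ℝ) + s ≤ (nbL d s G' b).card + (nbH d s G' b).card := by exact_mod_cast h1
    have h2' : ((d : ℝ) + 1) * s ≤ (nbL d s G' b).card + (d + 1) * (nbH d s G' b).card := by
      exact_mod_cast h2
    have := weight_lt (t := (s : ℝ) - 1) (δ := δ) (d := d) (a := (nbL d s G' b).card)
      (b := (nbH d s G' b).card) (by linarith) hsδ (by linarith) (by linarith) (by linarith)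
    linarith
  · -- here `s - 1` is itself an admissible density, with a positive amount to spare
    have hs23 : s = 2 ∨ s = 3 := by omega
    have hD : ∀ (G : SimpleGraph V) (S : Finset V), S.Nonempty → Inside G S →
        ¬ HasTopMinor G (⊤ : SimpleGraph (Fin (s + 1))) →
        (nE G : ℝ) ≤ ((s : ℝ) - 1) * S.card - ((s : ℝ) - 1) := by
      intro G S hne hS hG
      have h : ((nE G + (s - 1) : ℕ) : ℝ) ≤ _ := Nat.cast_le.2 (sparse_of_small hs23 G S hne hS hG)
      push_cast [Nat.cast_sub (show 1 ≤ s by omega)] at h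
      linarith
    refine choosable_of_forall_reducible (d := (s - 1) * (s - 2)) (by omega) G ?_
      fun G' hle hne => ?_
    · rcases hs23 with rfl | rfl
      · norm_num at hfloor ⊢; linarith
      · norm_num at hfloor ⊢; linarith
    · by_contra hred
      obtain ⟨b, h1, h2, -, h4⟩ := exists_heavy_of_not_reducible (by omega)
        (by linarith) (by linarith) hD G' (fun h => hG (hasTopMinor_mono hle h)) hne hred
      have h4 := h4 (by linarith)
      generalize (nbL ((s - 1) * (s - 2)) s G' b).card = α at h1 h2 h4
      generalize (nbH ((s - 1) * (s - 2)) s G' b).card = β at h1 h2 h4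
      rcases hs23 with rfl | rfl
      · norm_num at h1 h2 h4
        have : (2 : ℝ) ≤ α + β := by exact_mod_cast h1
        linarith
      · norm_num at h1 h2 h4
        have h1' : (5 : ℝ) ≤ α + β := by exact_mod_cast h1
        have h2' : (9 : ℝ) ≤ α + 3 * β := by exact_mod_cast h2
        linarith
end
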